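/- arXiv:1304.4784 — 2 statements merged into one kernel-verified Lean document; each statement's English description precedes it below -/
import Mathlib

section
/- Let n ≥ 2, let F_n be the free group of rank n, and let m ≥ 3 be an integer. The box space of F_n corresponding to the derived m-series is a bounded geometry metric space that coarsely embeds into Hilbert space ℓ²(ℕ,ℝ) but does not have property A. -/
open Filter
open scoped ENNReal NNReal
/-- `F` is a coarse embedding of `(X, dX)` into `(Y, dY)`: there are non-decreasing
functions `ρ₋, ρ₊` tending to infinity which control the distortion of distances. -/
def CoarseEmbeddingWith {X Y : Type*} (dX : X → X → ℝ) (dY : Y → Y → ℝ) (F : X → Y) : Prop :=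
  ∃ ρminus ρplus : ℝ → ℝ, Monotone ρminus ∧ Monotone ρplus ∧
    Tendsto ρminus atTop atTop ∧ Tendsto ρplus atTop atTop ∧
    ∀ x x' : X, ρminus (dX x x') ≤ dY (F x) (F x') ∧ dY (F x) (F x') ≤ ρplus (dX x x')

def IsPseudoMetricOn {X : Type*} (d : X → X → ℝ) : Prop :=
  (∀ x, d x x = 0) ∧ (∀ x y, d x y = d y x) ∧ ∀ x y z, d x z ≤ d x y + d y z

def IsMetricOn {X : Type*} (d : X → X → ℝ) : Prop :=
  (∀ x y, d x y = 0 ↔ x = y) ∧ (∀ x y, d x y = d y x) ∧ ∀ x y z, d x z ≤ d x y + d y z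

/-- The diameter of a space with distance function `dY`. -/
noncomputable def spaceDiam {Y : Type*} (dY : Y → Y → ℝ) : ℝ :=
  sSup (Set.range fun p : Y × Y => dY p.1 p.2)

/-- `D` is a coarse disjoint union of the spaces `(Y i, dY i)`: it restricts to `dY i` on each
component `Y i`, and the distance between two distinct components exceeds the maximum of
their diameters. -/
def IsCoarseDisjointUnionOf {ι : Type*} {Y : ι → Type*} (dY : ∀ i, Y i → Y i → ℝ)
    (D : (Σ i, Y i) → (Σ i, Y i) → ℝ) : Prop :=
  (∀ (i : ι) (x y : Y i), D ⟨i, x⟩ ⟨i, y⟩ = dY i x y) ∧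
  ∀ i j, i ≠ j → ∀ (x : Y i) (y : Y j),
    max (spaceDiam (dY i)) (spaceDiam (dY j)) < D ⟨i, x⟩ ⟨j, y⟩


/-- The word distance on the coset space `G ⧸ N` induced by the images of the
generating set `S` (using the symmetrized generating set `S ∪ S⁻¹`). -/
noncomputable def quotWordDist {G : Type*} [Group G] (S : Set G) (N : Subgroup G)
    (x y : G ⧸ N) : ℕ :=
  sInf {n | ∃ (g : G) (l : List G), (∀ a ∈ l, a ∈ S ∨ a⁻¹ ∈ S) ∧
    QuotientGroup.mk g = x ∧ QuotientGroup.mk (g * l.prod) = y ∧ l.length = n}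

/-- The derived `m`-series of `G`: `G_1 = G` and `G_{i+1} = [G_i, G_i]·G_i^m`
(here indexed from `0`, so `derivedMSeries G m i` is `G_{i+1}`). -/
def derivedMSeries (G : Type*) [Group G] (m : ℕ) : ℕ → Subgroup G
  | 0 => ⊤
  | i + 1 => ⁅derivedMSeries G m i, derivedMSeries G m i⁆ ⊔
      Subgroup.closure {x : G | ∃ y ∈ derivedMSeries G m i, x = y ^ m}

/-- A space with distance function `d` has bounded geometry: balls of any given radius
have uniformly bounded cardinality. -/
def BoundedGeometry {X : Type*} (d : X → X → ℝ) : Prop :=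
  ∀ R : ℝ, ∃ C : ℕ, ∀ x : X, Nat.card {y : X | d x y ≤ R} ≤ C

/-- Yu's property A for a discrete bounded geometry space with distance function `d`:
for all `R, ε > 0` there are `S > 0` and unit vectors `φ x ∈ ℓ²(X)` supported in
`B_S(x)` with `|1 - ⟪φ x₁, φ x₂⟫| ≤ ε` whenever `d x₁ x₂ ≤ R`. -/
def HasPropertyA {X : Type*} (d : X → X → ℝ) : Prop :=
  ∀ R > (0 : ℝ), ∀ ε > (0 : ℝ), ∃ S > (0 : ℝ), ∃ φ : X → X → ℝ,
    (∀ x, (Function.support (φ x)).Finite) ∧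
    (∀ x, ∑ᶠ y, φ x y * φ x y = 1) ∧
    (∀ x₁ x₂, d x₁ x₂ ≤ R → |1 - ∑ᶠ y, φ x₁ y * φ x₂ y| ≤ ε) ∧
    (∀ x y, φ x y ≠ 0 → d x y ≤ S)

/-!
Each quotient `F ⧸ Nᵢ₊₁` by the derived `m`-series is the `ℤ/m`-homology cover of `F ⧸ Nᵢ`: a word
`w ∈ Nᵢ` lies in `Nᵢ₊₁` iff it crosses every edge of the Cayley graph of `F ⧸ Nᵢ` a number of times
which is zero modulo `m`, counted with sign, i.e. iff its flow with coefficients in `ℤ/m` vanishes.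

A short reduced word crosses distinct edges, so its flow does not vanish. Hence the girth grows by
at least one at each level.

*Embedding.* Send a point of `F ⧸ Nᵢ₊₁` to the indicator of the graph of its flow. A word of length
`k` changes at most `k` values of the flow. Conversely, in a Cayley graph of girth greater than `k`
a nonzero chain supported on at most `k` edges has nonzero boundary, so a path whose flow is
supported on at most `k` edges has the same flow as a reduced path of length at most `k`. Markers
that depend on the level keep different components apart.

*Failure of property A.* Let `d` be the rank of `F`. On balls that look like the tree, the weight
`(1/2)^|u|` is a supersolution of the adjacency operator for the eigenvalue `d + 3/2`, hence the
quadratic form of the adjacency operator on vectors supported in such a ball is at most `d + 3/2`.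
The vectors of property A would push it to `2 * d * (1 - ε)`.
-/

section CoarseEmbeddings

theorem exists_monotone_tendsto_atTop_ge (c : ℕ → ℝ) :
    ∃ σ : ℝ → ℝ, Monotone σ ∧ Tendsto σ atTop atTop ∧ ∀ t, c ⌈t⌉₊ ≤ σ t :=
  ⟨fun t ↦ max t (partialSups c ⌈t⌉₊),
    fun _ _ h ↦ max_le_max h ((partialSups c).monotone (Nat.ceil_mono h)),
    tendsto_atTop_mono (fun _ ↦ le_max_left _ _) tendsto_id,
    fun _ ↦ le_max_of_le_right (le_partialSups c _)⟩

theorem exists_monotone_tendsto_atTop_forall_le {σ : ℝ → ℝ} (hmono : Monotone σ)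
    (hσ : Tendsto σ atTop atTop) :
    ∃ ρ : ℝ → ℝ, Monotone ρ ∧ Tendsto ρ atTop atTop ∧ ∀ s t, 0 ≤ s → t ≤ σ s → ρ t ≤ s := by
  have hne (t : ℝ) : {s | 0 ≤ s ∧ t ≤ σ s}.Nonempty :=
    ((eventually_ge_atTop 0).and (hσ.eventually_ge_atTop t)).exists
  have hbdd (t : ℝ) : BddBelow {s | 0 ≤ s ∧ t ≤ σ s} := ⟨0, fun _ hs ↦ hs.1⟩
  refine ⟨fun t ↦ sInf {s | 0 ≤ s ∧ t ≤ σ s}, fun t t' h ↦ ?_, tendsto_atTop.2 fun b ↦ ?_,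
    fun s t hs hts ↦ csInf_le (hbdd t) ⟨hs, hts⟩⟩
  · exact csInf_le_csInf (hbdd t) (hne t') fun s hs ↦ ⟨hs.1, h.trans hs.2⟩
  · filter_upwards [eventually_gt_atTop (σ b)] with t ht
    exact le_csInf (hne t) fun s hs ↦ (hmono.reflect_lt (ht.trans_le hs.2)).le

theorem coarseEmbeddingWith_of_forall_exists {X Y : Type*} {dX : X → X → ℝ} {dY : Y → Y → ℝ}
    {F : X → Y} (hF : ∀ x x', 0 ≤ dY (F x) (F x'))
    (hupper : ∀ R : ℝ, ∃ C : ℝ, ∀ x x', dX x x' ≤ R → dY (F x) (F x') ≤ C)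
    (hlower : ∀ C : ℝ, ∃ R : ℝ, ∀ x x', dY (F x) (F x') ≤ C → dX x x' ≤ R) :
    CoarseEmbeddingWith dX dY F := by
  choose C hC using fun k : ℕ ↦ hupper k
  choose R hR using fun k : ℕ ↦ hlower k
  obtain ⟨ρplus, hplus, hplus_top, hCρ⟩ := exists_monotone_tendsto_atTop_ge C
  obtain ⟨σ, hσ, hσ_top, hRσ⟩ := exists_monotone_tendsto_atTop_ge R
  obtain ⟨ρminus, hminus, hminus_top, hρσ⟩ := exists_monotone_tendsto_atTop_forall_le hσ hσ_top
  refine ⟨ρminus, ρplus, hminus, hplus, hminus_top, hplus_top, fun x x' ↦ ⟨?_, ?_⟩⟩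
  · exact hρσ _ _ (hF x x') ((hR _ x x' (Nat.le_ceil _)).trans (hRσ _))
  · exact (hC _ x x' (Nat.le_ceil _)).trans (hCρ _)

/-- The indicator function of a finite set, as a vector of `ℓ²`. -/
noncomputable def indicatorVec {ι : Type*} [DecidableEq ι] (A : Finset ι) :
    lp (fun _ : ι ↦ ℝ) 2 :=
  ∑ a ∈ A, lp.single 2 a (1 : ℝ)

theorem dist_indicatorVec {ι : Type*} [DecidableEq ι] (A B : Finset ι) :
    dist (indicatorVec A) (indicatorVec B) = √(symmDiff A B).card := by
  let f (a : ι) : ℝ := (if a ∈ A then 1 else 0) - (if a ∈ B then 1 else 0)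
  have hsum : indicatorVec A - indicatorVec B = ∑ a ∈ A ∪ B, lp.single 2 a (f a) := by
    have hsingle {C : Finset ι} (hC : C ⊆ A ∪ B) : indicatorVec C =
        ∑ a ∈ A ∪ B, lp.single (E := fun _ : ι ↦ ℝ) 2 a (if a ∈ C then 1 else 0) := by
      rw [indicatorVec, ← Finset.sum_subset hC fun a _ ha ↦ by simp [ha]]
      exact Finset.sum_congr rfl fun a ha ↦ by simp [ha]
    rw [hsingle Finset.subset_union_left, hsingle Finset.subset_union_right]
    simp only [f, lp.single_sub, Finset.sum_sub_distrib]
  have hf (a : ι) : ‖f a‖ ^ (2 : ℕ) = if a ∈ symmDiff A B then 1 else 0 := by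
    by_cases hA : a ∈ A <;> by_cases hB : a ∈ B <;> simp [f, hA, hB, Finset.mem_symmDiff]
  have hnorm := lp.norm_sum_single (p := 2) (E := fun _ : ι ↦ ℝ) (by norm_num) f (A ∪ B)
  simp only [ENNReal.toReal_ofNat, Real.rpow_ofNat, hf, ← hsum, ← dist_eq_norm] at hnorm
  rw [← Real.sqrt_sq dist_nonneg, hnorm, Finset.sum_boole, Finset.filter_mem_eq_inter,
    Finset.inter_eq_right.2 symmDiff_le_sup]

theorem exists_coarseEmbeddingWith_of_card_symmDiff {X κ : Type*} [Countable κ] [DecidableEq κ]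
    {d : X → X → ℝ} (T : X → Finset κ)
    (hupper : ∀ R : ℝ, ∃ C : ℕ, ∀ x y, d x y ≤ R → (symmDiff (T x) (T y)).card ≤ C)
    (hlower : ∀ C : ℕ, ∃ R : ℝ, ∀ x y, (symmDiff (T x) (T y)).card ≤ C → d x y ≤ R) :
    ∃ F : X → lp (fun _ : ℕ ↦ ℝ) 2, CoarseEmbeddingWith d (fun a b ↦ dist a b) F := by
  obtain ⟨e, he⟩ := exists_injective_nat κ
  let F (x : X) : lp (fun _ : ℕ ↦ ℝ) 2 := indicatorVec ((T x).image e)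
  have hdist (x y : X) : dist (F x) (F y) = √(symmDiff (T x) (T y)).card := by
    rw [dist_indicatorVec, ← Finset.image_symmDiff _ _ he, Finset.card_image_of_injective _ he]
  refine ⟨F, coarseEmbeddingWith_of_forall_exists (fun _ _ ↦ dist_nonneg) (fun R ↦ ?_) fun C ↦ ?_⟩
  · obtain ⟨C, hC⟩ := hupper R
    exact ⟨√C, fun x y h ↦ by rw [hdist]; gcongr; exact hC x y h⟩
  · obtain ⟨R, hR⟩ := hlower ⌊C ^ 2⌋₊
    refine ⟨R, fun x y h ↦ hR x y (Nat.le_floor ?_)⟩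
    rw [hdist] at h
    exact (Real.sqrt_le_left ((Real.sqrt_nonneg _).trans h)).1 h

theorem card_support_sub_le_card_graph_symmDiff {ι M : Type*} [DecidableEq ι] [AddGroup M]
    [DecidableEq M] (f g : ι →₀ M) :
    (f - g).support.card ≤ (symmDiff f.graph g.graph).card := by
  have hsub : (f - g).support ⊆ (symmDiff f.graph g.graph).image Prod.fst := fun e he ↦ by
    rw [Finsupp.mem_support_iff, Finsupp.sub_apply, sub_ne_zero] at he
    obtain hf | hg : f e ≠ 0 ∨ g e ≠ 0 := by
      by_contra! h
      exact he (h.1.trans h.2.symm)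
    · exact Finset.mem_image.2 ⟨(e, f e), by simp [Finset.mem_symmDiff, hf, he.symm], rfl⟩
    · exact Finset.mem_image.2 ⟨(e, g e), by simp [Finset.mem_symmDiff, hg, he], rfl⟩
  exact (Finset.card_le_card hsub).trans Finset.card_image_le

theorem card_graph_symmDiff_le_two_mul {ι M : Type*} [DecidableEq ι] [AddGroup M]
    [DecidableEq M] (f g : ι →₀ M) :
    (symmDiff f.graph g.graph).card ≤ 2 * (f - g).support.card := by
  let values (h : ι →₀ M) := (f - g).support.image fun e ↦ (e, h e)
  have hsub : symmDiff f.graph g.graph ⊆ values f ∪ values g := by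
    rintro ⟨e, c⟩ he
    simp only [Finset.mem_symmDiff, Finsupp.mem_graph_iff] at he
    simp only [values, Finset.mem_union, Finset.mem_image, Finsupp.mem_support_iff,
      Finsupp.sub_apply, sub_ne_zero, Prod.mk.injEq]
    grind
  have hcard := (Finset.card_le_card hsub).trans (Finset.card_union_le _ _)
  have hvalues (h : ι →₀ M) : (values h).card ≤ (f - g).support.card := Finset.card_image_le
  linarith [hvalues f, hvalues g]

end CoarseEmbeddings

section DisjointUnions

variable {Y : ℕ → Type*} {D : (Σ i, Y i) → (Σ i, Y i) → ℝ}

/-- The components of a disjoint union indexed by `ℕ` drift apart: two points of different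
components which are at distance at most `R` lie in one of finitely many components. -/
def SeparatedComponents (D : (Σ i, Y i) → (Σ i, Y i) → ℝ) : Prop :=
  ∀ R : ℝ, ∃ J : ℕ, ∀ x y, x.1 ≠ y.1 → D x y ≤ R → x.1 < J ∧ y.1 < J

theorem IsCoarseDisjointUnionOf.separatedComponents {dY : ∀ i, Y i → Y i → ℝ}
    (hD : IsCoarseDisjointUnionOf dY D)
    (hdiam : Tendsto (fun i ↦ spaceDiam (dY i)) atTop atTop) : SeparatedComponents D := by
  intro R
  obtain ⟨J, hJ⟩ := eventually_atTop.1 (hdiam.eventually_ge_atTop R)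
  refine ⟨J, fun ⟨i, x⟩ ⟨j, y⟩ hij hR ↦ ?_⟩
  obtain ⟨hi, hj⟩ := max_lt_iff.1 ((hD.2 i j hij x y).trans_le hR)
  exact ⟨lt_of_not_ge fun h ↦ (hJ i h).not_gt hi, lt_of_not_ge fun h ↦ (hJ j h).not_gt hj⟩

theorem finite_setOf_sigma_fst_lt [∀ i, Finite (Y i)] (J : ℕ) : {x : Σ i, Y i | x.1 < J}.Finite :=
  (Set.finite_Iio J).preimage' fun i _ ↦
    (Set.finite_range (Sigma.mk i)).subset fun ⟨_, y⟩ h ↦ by cases h; exact ⟨y, rfl⟩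

theorem exists_forall_le_of_eventually_component_le [∀ i, Finite (Y i)] {β : Type*} [LinearOrder β]
    [Nonempty β] {P : (Σ i, Y i) → (Σ i, Y i) → Prop} {f : (Σ i, Y i) → (Σ i, Y i) → β}
    (hne : ∃ J, ∀ x y, x.1 ≠ y.1 → P x y → x.1 < J ∧ y.1 < J)
    (heq : ∃ C, ∀ᶠ i in atTop, ∀ x y : Y i, P ⟨i, x⟩ ⟨i, y⟩ → f ⟨i, x⟩ ⟨i, y⟩ ≤ C) :
    ∃ C, ∀ x y, P x y → f x y ≤ C := by
  obtain ⟨J, hJ⟩ := hne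
  obtain ⟨C, hC⟩ := heq
  obtain ⟨J', hJ'⟩ := eventually_atTop.1 hC
  have hfin := finite_setOf_sigma_fst_lt (Y := Y) (max J J')
  obtain ⟨B, hB⟩ := ((hfin.prod hfin).image fun p ↦ f p.1 p.2).bddAbove
  have hsmall {x y : Σ i, Y i} (hx : x.1 < max J J') (hy : y.1 < max J J') : f x y ≤ B :=
    hB ⟨(x, y), ⟨hx, hy⟩, rfl⟩
  refine ⟨max B C, fun ⟨i, x⟩ ⟨j, y⟩ hP ↦ ?_⟩
  obtain rfl | hij := eq_or_ne i j
  · obtain hi | hi := lt_or_ge i J'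
    · exact le_max_of_le_left (hsmall (lt_max_of_lt_right hi) (lt_max_of_lt_right hi))
    · exact le_max_of_le_right (hJ' i hi x y hP)
  · obtain ⟨hi, hj⟩ := hJ _ _ hij hP
    exact le_max_of_le_left (hsmall (lt_max_of_lt_left hi) (lt_max_of_lt_left hj))

theorem SeparatedComponents.boundedGeometry [∀ i, Finite (Y i)] (hD : SeparatedComponents D)
    (hball : ∀ R : ℝ, ∃ C : ℕ, ∀ i (x : Y i), {y | D ⟨i, x⟩ ⟨i, y⟩ ≤ R}.ncard ≤ C) :
    BoundedGeometry D := by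
  intro R
  obtain ⟨J, hJ⟩ := hD R
  obtain ⟨C, hC⟩ := hball R
  refine ⟨{x : Σ i, Y i | x.1 < J}.ncard + C, fun ⟨i, x⟩ ↦ ?_⟩
  have hsub : {y | D ⟨i, x⟩ y ≤ R} ⊆
      {y | y.1 < J} ∪ Sigma.mk i '' {y | D ⟨i, x⟩ ⟨i, y⟩ ≤ R} := by
    rintro ⟨j, y⟩ hy
    obtain rfl | hij := eq_or_ne i j
    · exact .inr ⟨y, hy, rfl⟩
    · exact .inl (hJ _ _ hij hy).2
  calc Nat.card {y | D ⟨i, x⟩ y ≤ R}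
      ≤ ({y | y.1 < J} ∪ Sigma.mk i '' {y | D ⟨i, x⟩ ⟨i, y⟩ ≤ R}).ncard :=
        Set.ncard_le_ncard hsub ((finite_setOf_sigma_fst_lt J).union (Set.toFinite _))
    _ ≤ {y : Σ i, Y i | y.1 < J}.ncard + (Sigma.mk i '' {y | D ⟨i, x⟩ ⟨i, y⟩ ≤ R}).ncard :=
        Set.ncard_union_le _ _
    _ ≤ _ := by gcongr; exact (Set.ncard_image_le (Set.toFinite _)).trans (hC i x)

theorem finsum_sigma_eq_sum_component {ι M : Type*} {Y : ι → Type*} [AddCommMonoid M] (i : ι)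
    [Fintype (Y i)] {f : (Σ i, Y i) → M} (hf : ∀ z, f z ≠ 0 → z.1 = i) :
    ∑ᶠ z, f z = ∑ y, f ⟨i, y⟩ := by
  rw [finsum_eq_sum_of_support_subset (s := Finset.univ.map (.sigmaMk i)), Finset.sum_map]
  · rfl
  · rintro ⟨j, z⟩ hz
    obtain rfl : j = i := hf _ hz
    simp

theorem HasPropertyA.exists_eventually_component [∀ i, Fintype (Y i)] (hA : HasPropertyA D)
    (hD : SeparatedComponents D) {R ε : ℝ} (hR : 0 < R) (hε : 0 < ε) :
    ∃ S : ℝ, ∀ᶠ i in atTop, ∃ φ : Y i → Y i → ℝ, (∀ x, ∑ y, φ x y * φ x y = 1) ∧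
      (∀ x x', D ⟨i, x⟩ ⟨i, x'⟩ ≤ R → |1 - ∑ y, φ x y * φ x' y| ≤ ε) ∧
      ∀ x y, φ x y ≠ 0 → D ⟨i, x⟩ ⟨i, y⟩ ≤ S := by
  obtain ⟨S, -, φ, -, hunit, hclose, hsupp⟩ := hA R hR ε hε
  obtain ⟨J, hJ⟩ := hD S
  refine ⟨S, (eventually_ge_atTop J).mono fun i hi ↦
    ⟨fun x y ↦ φ ⟨i, x⟩ ⟨i, y⟩, fun x ↦ ?_, fun x x' h ↦ ?_, fun x y h ↦ hsupp _ _ h⟩⟩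
  all_goals
    have hcomp (x : Y i) (z) (hz : φ ⟨i, x⟩ z ≠ 0) : z.1 = i := by
      by_contra hne
      exact (hJ _ _ (Ne.symm hne) (hsupp _ _ hz)).1.not_ge hi
  · rw [← hunit ⟨i, x⟩, finsum_sigma_eq_sum_component i fun z hz ↦
      hcomp x z (left_ne_zero_of_mul hz)]
  · rw [← finsum_sigma_eq_sum_component i (f := fun z ↦ φ ⟨i, x⟩ z * φ ⟨i, x'⟩ z) fun z hz ↦
      hcomp x z (left_ne_zero_of_mul hz)]
    exact hclose _ _ h

/-- The set `A`, together with `i` marker points, inside the `i`-th component of a disjoint union.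
The markers put such sets at distance at least `i + j` when `i ≠ j`. -/
def markedComponent {κ : ℕ → Type*} (i : ℕ) (A : Finset (κ i)) : Finset (Σ i, ℕ ⊕ κ i) :=
  ((Finset.range i).disjSum A).map (.sigmaMk i)

theorem card_symmDiff_markedComponent {κ : ℕ → Type*} [∀ i, DecidableEq (κ i)] (i : ℕ)
    (A B : Finset (κ i)) :
    (symmDiff (markedComponent i A) (markedComponent i B)).card = (symmDiff A B).card := by
  have h : symmDiff ((Finset.range i).disjSum A) ((Finset.range i).disjSum B) =
      (symmDiff A B).map .inr := by
    ext (k | y) <;> simp [Finset.mem_symmDiff]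
  rw [markedComponent, markedComponent, Finset.map_eq_image, Finset.map_eq_image,
    ← Finset.image_symmDiff _ _ (Function.Embedding.injective _), h, Finset.card_image_of_injective
    _ (Function.Embedding.injective _), Finset.card_map]

theorem add_le_card_symmDiff_markedComponent {κ : ℕ → Type*} [∀ i, DecidableEq (κ i)] {i j : ℕ}
    (hij : i ≠ j) (A : Finset (κ i)) (B : Finset (κ j)) :
    i + j ≤ (symmDiff (markedComponent i A) (markedComponent j B)).card := by
  have hdisj : Disjoint (markedComponent i A) (markedComponent j B) := by
    simp only [Finset.disjoint_left, markedComponent, Finset.mem_map]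
    rintro _ ⟨x, -, rfl⟩ ⟨y, -, h⟩
    exact hij (congrArg Sigma.fst h).symm
  rw [hdisj.symmDiff_eq_sup, Finset.sup_eq_union, Finset.card_union_of_disjoint hdisj]
  simp only [markedComponent, Finset.card_map, Finset.card_disjSum, Finset.card_range]
  omega

theorem SeparatedComponents.exists_coarseEmbeddingWith [∀ i, Finite (Y i)] {κ : ℕ → Type*}
    [∀ i, Countable (κ i)] [∀ i, DecidableEq (κ i)] (hD : SeparatedComponents D)
    (T : ∀ i, Y i → Finset (κ i))
    (hupper : ∀ R : ℝ, ∃ C : ℕ, ∀ᶠ i in atTop, ∀ x y : Y i,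
      D ⟨i, x⟩ ⟨i, y⟩ ≤ R → (symmDiff (T i x) (T i y)).card ≤ C)
    (hlower : ∀ C : ℕ, ∃ R : ℝ, ∀ᶠ i in atTop, ∀ x y : Y i,
      (symmDiff (T i x) (T i y)).card ≤ C → D ⟨i, x⟩ ⟨i, y⟩ ≤ R) :
    ∃ F : (Σ i, Y i) → lp (fun _ : ℕ ↦ ℝ) 2, CoarseEmbeddingWith D (fun a b ↦ dist a b) F := by
  refine exists_coarseEmbeddingWith_of_card_symmDiff (fun x ↦ markedComponent x.1 (T x.1 x.2))
    (fun R ↦ ?_) fun C ↦ ?_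
  · refine exists_forall_le_of_eventually_component_le (hD R) ?_
    simpa only [card_symmDiff_markedComponent] using hupper R
  · refine exists_forall_le_of_eventually_component_le ⟨C + 1, fun x y hxy hC ↦ ?_⟩ ?_
    · have := add_le_card_symmDiff_markedComponent hxy (T x.1 x.2) (T y.1 y.2)
      omega
    · simpa only [card_symmDiff_markedComponent] using hlower C

end DisjointUnions

section QuotientNorm

variable {α Q : Type*} [Group Q]

theorem freeGroup_mk_singleton_not (a : α) (b : Bool) :
    FreeGroup.mk [(a, !b)] = (FreeGroup.mk [(a, b)])⁻¹ := by
  simp [FreeGroup.inv_mk, FreeGroup.invRev]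

theorem freeGroup_mk_singleton_false (a : α) : FreeGroup.mk [(a, false)] = (FreeGroup.of a)⁻¹ :=
  freeGroup_mk_singleton_not a true

theorem freeGroup_mk_cons (x : α × Bool) (l : List (α × Bool)) :
    FreeGroup.mk (x :: l) = FreeGroup.mk [x] * FreeGroup.mk l := by
  rw [FreeGroup.mul_mk, List.singleton_append]

variable [DecidableEq α]

theorem finite_setOf_freeGroup_norm_le [Finite α] (k : ℕ) : {w : FreeGroup α | w.norm ≤ k}.Finite :=
  (List.finite_length_le (α × Bool) k).preimage FreeGroup.toWord_injective.injOn

theorem freeGroup_norm_list_prod_le_length {l : List (FreeGroup α)} (hl : ∀ a ∈ l, a.norm ≤ 1) :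
    l.prod.norm ≤ l.length := by
  induction l with
  | nil => simp
  | cons a l ih =>
    have ha := hl a List.mem_cons_self
    have hprod := ih fun b hb ↦ hl b (List.mem_cons_of_mem _ hb)
    have := FreeGroup.norm_mul_le a l.prod
    rw [List.prod_cons, List.length_cons]
    omega

theorem exists_list_prod_eq_length_eq_norm (w : FreeGroup α) :
    ∃ l : List (FreeGroup α), (∀ a ∈ l, a ∈ Set.range FreeGroup.of ∨ a⁻¹ ∈ Set.range FreeGroup.of) ∧
      l.prod = w ∧ l.length = w.norm := by
  have hprod (l : List (α × Bool)) : (l.map fun x ↦ FreeGroup.mk [x]).prod = FreeGroup.mk l := by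
    induction l with
    | nil => rfl
    | cons x l ih => rw [List.map_cons, List.prod_cons, ih, ← freeGroup_mk_cons]
  refine ⟨w.toWord.map fun x ↦ FreeGroup.mk [x], fun a ha ↦ ?_, ?_, List.length_map _⟩
  · obtain ⟨⟨a, _ | _⟩, -, rfl⟩ := List.mem_map.1 ha
    · exact .inr ⟨a, freeGroup_mk_singleton_not a false⟩
    · exact .inl ⟨a, rfl⟩
  · rw [hprod, FreeGroup.mk_toWord]

theorem exists_forall_ne_norm_mul_mk_singleton [Nonempty α] (u : FreeGroup α) :
    ∃ x₀, ∀ x ≠ x₀, (u * FreeGroup.mk [x]).norm = u.norm + 1 := by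
  suffices h : ∃ x₀, ∀ x ≠ x₀, FreeGroup.IsReduced (u.toWord ++ [x]) by
    refine h.imp fun x₀ hx₀ x hx ↦ ?_
    rw [FreeGroup.norm, ← FreeGroup.mk_toWord (x := u), FreeGroup.mul_mk, FreeGroup.toWord_mk,
      (hx₀ x hx).reduce_eq, List.length_append, FreeGroup.mk_toWord]
    rfl
  have hu : FreeGroup.IsReduced u.toWord := FreeGroup.isReduced_toWord
  obtain hnil | ⟨l, y, hl⟩ := u.toWord.eq_nil_or_concat
  · obtain ⟨a⟩ := ‹Nonempty α›
    exact ⟨(a, true), fun x _ ↦ by simp [hnil]⟩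
  · refine ⟨(y.1, !y.2), fun x hx ↦ ?_⟩
    rw [hl, List.concat_eq_append] at hu ⊢
    refine hu.append_overlap (L₂ := [y]) ?_ (List.cons_ne_nil _ _)
    simp only [List.cons_append, List.nil_append, FreeGroup.IsReduced, List.isChain_cons_cons,
      List.isChain_singleton, and_true]
    exact fun h ↦ by_contra fun hne ↦ hx (Prod.ext h.symm (Bool.eq_not.2 (Ne.symm hne)))

theorem sum_half_pow_norm_mul_mk_singleton_le [Fintype α] [Nonempty α] (u : FreeGroup α) :
    ∑ x : α × Bool, (1 / 2 : ℝ) ^ (u * FreeGroup.mk [x]).norm ≤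
      (Fintype.card α + 3 / 2) * (1 / 2 : ℝ) ^ u.norm := by
  obtain ⟨x₀, hx₀⟩ := exists_forall_ne_norm_mul_mk_singleton u
  have hlower : u.norm ≤ (u * FreeGroup.mk [x₀]).norm + 1 := by
    have := FreeGroup.norm_mul_le (u * FreeGroup.mk [x₀]) (FreeGroup.mk [x₀])⁻¹
    rw [mul_inv_cancel_right, FreeGroup.norm_inv_eq] at this
    exact this.trans (Nat.add_le_add_left FreeGroup.norm_mk_le _)
  calc ∑ x : α × Bool, (1 / 2 : ℝ) ^ (u * FreeGroup.mk [x]).norm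
      ≤ ∑ x : α × Bool, (1 / 2 + if x = x₀ then 3 / 2 else 0) * (1 / 2 : ℝ) ^ u.norm := by
        refine Finset.sum_le_sum fun x _ ↦ ?_
        split_ifs with hx
        · subst hx
          have := pow_le_pow_of_le_one (by norm_num : (0 : ℝ) ≤ 1 / 2) (by norm_num) hlower
          rw [pow_succ] at this
          linarith
        · rw [hx₀ x hx, pow_succ]
          linarith
    _ = (Fintype.card α + 3 / 2) * (1 / 2 : ℝ) ^ u.norm := by
        rw [← Finset.sum_mul, Finset.sum_add_distrib]
        simp

/-- The word norm on a quotient `π : FreeGroup α →* Q`: the length of a shortest representative. It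
is the junk value `0` outside the range of `π`. -/
noncomputable def quotNorm (π : FreeGroup α →* Q) (q : Q) : ℕ :=
  sInf (FreeGroup.norm '' {w | π w = q})

theorem quotNorm_map_le (π : FreeGroup α →* Q) (w : FreeGroup α) : quotNorm π (π w) ≤ w.norm :=
  Nat.sInf_le ⟨w, rfl, rfl⟩

theorem exists_norm_eq_quotNorm {π : FreeGroup α →* Q} (hπ : Function.Surjective π) (q : Q) :
    ∃ w, π w = q ∧ w.norm = quotNorm π q :=
  Nat.sInf_mem (Set.Nonempty.image _ (hπ q))

theorem quotWordDist_range_of_eq_quotNorm (N : Subgroup (FreeGroup α)) [N.Normal]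
    (x y : FreeGroup α ⧸ N) :
    quotWordDist (Set.range FreeGroup.of) N x y = quotNorm (QuotientGroup.mk' N) (x⁻¹ * y) := by
  obtain ⟨g, rfl⟩ := QuotientGroup.mk'_surjective N x
  obtain ⟨w, hw, hnorm⟩ := exists_norm_eq_quotNorm (QuotientGroup.mk'_surjective N)
    ((QuotientGroup.mk' N g)⁻¹ * y)
  obtain ⟨l, hl, rfl, hlen⟩ := exists_list_prod_eq_length_eq_norm w
  rw [← hnorm, ← hlen]
  have hy : QuotientGroup.mk' N (g * l.prod) = y := by rw [map_mul, hw, mul_inv_cancel_left]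
  refine le_antisymm (Nat.sInf_le ⟨g, l, hl, rfl, hy, rfl⟩)
    (le_csInf ⟨_, g, l, hl, rfl, hy, rfl⟩ ?_)
  rintro _ ⟨g', l', hl', hg', rfl, rfl⟩
  rw [hlen, hnorm, ← hg']
  refine (le_of_eq_of_le ?_ (quotNorm_map_le (QuotientGroup.mk' N) l'.prod)).trans
    (freeGroup_norm_list_prod_le_length fun a ha ↦ ?_)
  · simp
  · obtain ⟨b, rfl⟩ | ⟨b, hb⟩ := hl' a ha
    · exact (FreeGroup.norm_of b).le
    · rw [← FreeGroup.norm_inv_eq, ← hb, FreeGroup.norm_of]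

/-- The Cayley graph of the quotient `π : FreeGroup α →* Q` has girth greater than `K`: no
nontrivial reduced word of length at most `K` is trivial in `Q`. -/
def CayleyGirthGT (π : FreeGroup α →* Q) (K : ℕ) : Prop :=
  ∀ w, π w = 1 → w ≠ 1 → K < w.norm

variable {π : FreeGroup α →* Q} {K : ℕ}

theorem CayleyGirthGT.mono (hK : CayleyGirthGT π K) {L : ℕ} (hL : L ≤ K) : CayleyGirthGT π L :=
  fun w hw hne ↦ hL.trans_lt (hK w hw hne)

theorem CayleyGirthGT.eq_of_map_eq (hK : CayleyGirthGT π K) {w w' : FreeGroup α}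
    (h : π w = π w') (hnorm : w.norm + w'.norm ≤ K) : w = w' := by
  by_contra hne
  have hlt := hK (w⁻¹ * w') (by rw [map_mul, map_inv, h, inv_mul_cancel])
    fun h1 ↦ hne (inv_mul_eq_one.1 h1)
  have := FreeGroup.norm_mul_le w⁻¹ w'
  rw [FreeGroup.norm_inv_eq] at this
  omega

theorem CayleyGirthGT.quotNorm_map_eq (hK : CayleyGirthGT π K) {w : FreeGroup α}
    (hw : 2 * w.norm ≤ K) : quotNorm π (π w) = w.norm := by
  obtain ⟨w', hw', hnorm⟩ : ∃ w', π w' = π w ∧ w'.norm = quotNorm π (π w) :=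
    Nat.sInf_mem (s := FreeGroup.norm '' {w' | π w' = π w}) ⟨_, w, rfl, rfl⟩
  have := quotNorm_map_le π w
  rw [← hnorm, hK.eq_of_map_eq hw' (by omega)]

end QuotientNorm

section SpectralBound

-- The weight `f` enters through `2 h(x) h(σx) ≤ (f(σx) / f(x)) h(x)² + (f(x) / f(σx)) h(σx)²`.
theorem two_mul_sum_mul_comp_perm_le_of_supersolution {X ι : Type*} [Fintype X] [Fintype ι]
    (σ : ι → Equiv.Perm X) {f h : X → ℝ} {C : ℝ} (hf : ∀ x, 0 < f x)
    (hsuper : ∀ x, h x ≠ 0 → ∑ i, (f (σ i x) + f ((σ i)⁻¹ x)) ≤ C * f x) :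
    2 * ∑ x, ∑ i, h x * h (σ i x) ≤ C * ∑ x, h x ^ 2 := by
  have hamgm (x y : X) : 2 * (h x * h y) ≤ f y / f x * h x ^ 2 + f x / f y * h y ^ 2 := by
    have hx := hf x
    have hy := hf y
    rw [← sub_nonneg]
    calc (0 : ℝ) ≤ (f y * h x - f x * h y) ^ 2 / (f x * f y) := by positivity
      _ = _ := by field_simp; ring
  have hpoint (x : X) : (∑ i, (f (σ i x) + f ((σ i)⁻¹ x))) / f x * h x ^ 2 ≤ C * h x ^ 2 := by
    obtain hx | hx := eq_or_ne (h x) 0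
    · simp [hx]
    · gcongr
      exact (div_le_iff₀ (hf x)).2 (hsuper x hx)
  calc 2 * ∑ x, ∑ i, h x * h (σ i x)
      = ∑ i, ∑ x, 2 * (h x * h (σ i x)) := by rw [Finset.sum_comm]; simp only [Finset.mul_sum]
    _ ≤ ∑ i, ∑ x, (f (σ i x) / f x * h x ^ 2 + f x / f (σ i x) * h (σ i x) ^ 2) := by
        gcongr
        exact hamgm _ _
    _ = ∑ i, ∑ x, (f (σ i x) / f x * h x ^ 2 + f ((σ i)⁻¹ x) / f x * h x ^ 2) := by
        refine Finset.sum_congr rfl fun i _ ↦ ?_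
        rw [Finset.sum_add_distrib, Finset.sum_add_distrib, ← Equiv.sum_comp (σ i)
          fun x ↦ f ((σ i)⁻¹ x) / f x * h x ^ 2]
        simp
    _ = ∑ x, (∑ i, (f (σ i x) + f ((σ i)⁻¹ x))) / f x * h x ^ 2 := by
        rw [Finset.sum_comm]
        simp only [Finset.sum_div, Finset.sum_mul, add_div, add_mul]
    _ ≤ C * ∑ x, h x ^ 2 := by
        rw [Finset.mul_sum]
        exact Finset.sum_le_sum fun x _ ↦ hpoint x

variable {α Q : Type*} [DecidableEq α] [Fintype α] [Nonempty α] [Group Q] [Fintype Q]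
  {π : FreeGroup α →* Q} {S : ℕ}

-- On the ball of radius `S` the quotient looks like the tree, where `(1/2)^|u|` is the weight.
theorem CayleyGirthGT.two_mul_sum_mul_le (hgirth : CayleyGirthGT π (2 * S + 2))
    (hπ : Function.Surjective π) {h : Q → ℝ} {y : Q}
    (hh : ∀ x, h x ≠ 0 → quotNorm π (y⁻¹ * x) ≤ S) :
    2 * ∑ x, ∑ a, h x * h (x * π (FreeGroup.of a)) ≤
      (Fintype.card α + 3 / 2) * ∑ x, h x ^ 2 := by
  refine two_mul_sum_mul_comp_perm_le_of_supersolution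
    (fun a ↦ Equiv.mulRight (π (FreeGroup.of a)))
    (f := fun x ↦ (1 / 2 : ℝ) ^ quotNorm π (y⁻¹ * x)) (fun x ↦ by positivity) fun x hx ↦ ?_
  obtain ⟨u, hu, hnorm⟩ := exists_norm_eq_quotNorm hπ (y⁻¹ * x)
  have huS : u.norm ≤ S := hnorm.trans_le (hh x hx)
  have hstep (l : α × Bool) :
      quotNorm π (y⁻¹ * (x * π (FreeGroup.mk [l]))) = (u * FreeGroup.mk [l]).norm := by
    have := FreeGroup.norm_mul_le u (FreeGroup.mk [l])
    have : (FreeGroup.mk [l]).norm ≤ 1 := FreeGroup.norm_mk_le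
    rw [← mul_assoc, ← hu, ← map_mul, hgirth.quotNorm_map_eq (by omega)]
  calc ∑ a, ((1 / 2 : ℝ) ^ quotNorm π (y⁻¹ * (x * π (FreeGroup.of a))) +
        (1 / 2) ^ quotNorm π (y⁻¹ * (x * (π (FreeGroup.of a))⁻¹)))
      = ∑ l : α × Bool, (1 / 2 : ℝ) ^ (u * FreeGroup.mk [l]).norm := by
        simp only [← hstep, Fintype.sum_prod_type, Fintype.sum_bool, ← map_inv,
          ← freeGroup_mk_singleton_false]
        rfl
    _ ≤ (Fintype.card α + 3 / 2) * (1 / 2) ^ quotNorm π (y⁻¹ * x) :=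
        hnorm ▸ sum_half_pow_norm_mul_mk_singleton_le u

theorem CayleyGirthGT.two_mul_card_mul_le (hgirth : CayleyGirthGT π (2 * S + 2))
    (hπ : Function.Surjective π) {φ : Q → Q → ℝ} {ε : ℝ}
    (hunit : ∀ x, ∑ y, φ x y * φ x y = 1)
    (hsupp : ∀ x y, φ x y ≠ 0 → quotNorm π (x⁻¹ * y) ≤ S)
    (hclose : ∀ x a, 1 - ε ≤ ∑ y, φ x y * φ (x * π (FreeGroup.of a)) y) :
    2 * Fintype.card α * (1 - ε) ≤ Fintype.card α + 3 / 2 := by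
  have hcard : (0 : ℝ) < Fintype.card Q := by exact_mod_cast Fintype.card_pos
  have hsupp' (x y : Q) (hxy : φ x y ≠ 0) : quotNorm π (y⁻¹ * x) ≤ S := by
    obtain ⟨w, hw, hnorm⟩ := exists_norm_eq_quotNorm hπ (x⁻¹ * y)
    rw [← inv_inv x, ← mul_inv_rev, ← hw, ← map_inv]
    exact (quotNorm_map_le π _).trans
      ((FreeGroup.norm_inv_eq.trans hnorm).trans_le (hsupp x y hxy))
  refine le_of_mul_le_mul_left ?_ hcard
  calc (Fintype.card Q : ℝ) * (2 * Fintype.card α * (1 - ε))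
      = 2 * ∑ _x : Q, ∑ _a : α, (1 - ε) := by simp; ring
    _ ≤ 2 * ∑ x : Q, ∑ a, ∑ y, φ x y * φ (x * π (FreeGroup.of a)) y := by
        gcongr
        exact hclose _ _
    _ = ∑ y, 2 * ∑ x, ∑ a, φ x y * φ (x * π (FreeGroup.of a)) y := by
        rw [← Finset.mul_sum]
        exact congrArg _ ((Finset.sum_congr rfl fun x _ ↦ Finset.sum_comm).trans Finset.sum_comm)
    _ ≤ ∑ y, (Fintype.card α + 3 / 2) * ∑ x, φ x y ^ 2 := by
        exact Finset.sum_le_sum fun y _ ↦ hgirth.two_mul_sum_mul_le hπ fun x ↦ hsupp' x y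
    _ = (Fintype.card α + 3 / 2) * ∑ x, ∑ y, φ x y * φ x y := by
        rw [← Finset.mul_sum, Finset.sum_comm]
        simp only [pow_two]
    _ = Fintype.card Q * (Fintype.card α + 3 / 2) := by simp [hunit, mul_comm]

end SpectralBound

section Flows

variable {α Q : Type*} [Group Q] (π : FreeGroup α →* Q)

/-- The edge of the Cayley graph of `π` traversed from the vertex `v` along the letter `x`. The
edge joining `u` to `u * π (FreeGroup.of a)` is encoded as `(u, a)`. -/
def dartEdge (v : Q) (x : α × Bool) : Q × α :=
  (if x.2 then v else v * π (FreeGroup.mk [x]), x.1)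

theorem dartEdge_eq_dartEdge_iff {u v : Q} {x y : α × Bool} :
    dartEdge π v x = dartEdge π u y ↔
      u = v ∧ y = x ∨ u = v * π (FreeGroup.mk [x]) ∧ y = (x.1, !x.2) := by
  obtain ⟨a, b⟩ := x
  obtain ⟨c, d⟩ := y
  have hfalse : FreeGroup.mk [(a, false)] = (FreeGroup.mk [(a, true)])⁻¹ :=
    freeGroup_mk_singleton_false a
  obtain rfl | hca := eq_or_ne c a
  · cases b <;> cases d <;>
      simp [-FreeGroup.inv_mk, dartEdge, hfalse, eq_comm (a := v), eq_comm (a := v * _),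
        mul_inv_eq_iff_eq_mul]
  · simp [dartEdge, hca, hca.symm]

/-- The list of edges of the Cayley graph of `π` traversed by the path from `v` spelling `l`. -/
def pathEdges : Q → List (α × Bool) → List (Q × α)
  | _, [] => []
  | v, x :: l => dartEdge π v x :: pathEdges (v * π (FreeGroup.mk [x])) l

theorem length_pathEdges (v : Q) (l : List (α × Bool)) :
    (pathEdges π v l).length = l.length := by
  induction l generalizing v with
  | nil => rfl
  | cons x l ih => rw [pathEdges, List.length_cons, ih, List.length_cons]

theorem pathEdges_append (v : Q) (l l' : List (α × Bool)) :
    pathEdges π v (l ++ l') = pathEdges π v l ++ pathEdges π (v * π (FreeGroup.mk l)) l' := by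
  induction l generalizing v with
  | nil => simp [pathEdges, ← FreeGroup.one_eq_mk]
  | cons x l ih =>
    rw [List.cons_append, pathEdges, ih, pathEdges, freeGroup_mk_cons x l, map_mul, mul_assoc,
      List.cons_append]

theorem exists_eq_append_of_mem_pathEdges {v : Q} {l : List (α × Bool)} {e : Q × α}
    (he : e ∈ pathEdges π v l) :
    ∃ l₁ y l₂, l = l₁ ++ y :: l₂ ∧ e = dartEdge π (v * π (FreeGroup.mk l₁)) y := by
  induction l generalizing v with
  | nil => simp [pathEdges] at he
  | cons x l ih =>
    obtain rfl | he := List.mem_cons.1 he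
    · exact ⟨[], x, l, rfl, by rw [← FreeGroup.one_eq_mk, map_one, mul_one]⟩
    · obtain ⟨l₁, y, l₂, rfl, rfl⟩ := ih he
      exact ⟨x :: l₁, y, l₂, rfl, by rw [freeGroup_mk_cons x l₁, map_mul, mul_assoc]⟩

variable {π} in
theorem CayleyGirthGT.eq_nil_of_isReduced [DecidableEq α] {K : ℕ} (hK : CayleyGirthGT π K)
    {l : List (α × Bool)} (hl : FreeGroup.IsReduced l) (hlen : l.length ≤ K)
    (h : π (FreeGroup.mk l) = 1) : l = [] := by
  by_contra hne
  have hword : (FreeGroup.mk l).toWord = l := by rw [FreeGroup.toWord_mk, hl.reduce_eq]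
  have hlt := hK _ h fun h1 ↦ hne (by rw [← hword, h1, FreeGroup.toWord_one])
  exact hlt.not_ge (FreeGroup.norm_mk_le.trans hlen)

variable {π} in
theorem CayleyGirthGT.nodup_pathEdges [DecidableEq α] {K : ℕ} (hK : CayleyGirthGT π K) (v : Q)
    {l : List (α × Bool)} (hl : FreeGroup.IsReduced l) (hlen : l.length ≤ K + 1) :
    (pathEdges π v l).Nodup := by
  induction l generalizing v with
  | nil => exact List.nodup_nil
  | cons x l ih =>
    rw [List.length_cons] at hlen
    refine List.nodup_cons.2 ⟨fun hmem ↦ ?_,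
      ih _ (hl.infix (List.suffix_cons x l).isInfix) (by omega)⟩
    obtain ⟨l₁, y, l₂, rfl, hedge⟩ := exists_eq_append_of_mem_pathEdges π hmem
    rw [List.length_append, List.length_cons] at hlen
    obtain ⟨hv, rfl⟩ | ⟨hv, rfl⟩ := (dartEdge_eq_dartEdge_iff π).1 hedge
    · have hpath : π (FreeGroup.mk (y :: l₁)) = 1 := by
        rwa [mul_assoc, mul_eq_left, ← map_mul, ← freeGroup_mk_cons] at hv
      exact List.cons_ne_nil _ _ (hK.eq_nil_of_isReduced
        (hl.infix (L₁ := y :: l₁) ⟨[], y :: l₂, by simp⟩) (by rw [List.length_cons]; omega) hpath)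
    · obtain rfl : l₁ = [] := hK.eq_nil_of_isReduced
        (hl.infix (L₁ := l₁) ⟨[x], (x.1, !x.2) :: l₂, by simp⟩) (by omega) (mul_eq_left.1 hv)
      simp [FreeGroup.IsReduced] at hl

variable {R : Type*} [Ring R]

/-- The orientation of a letter of the free group, as a coefficient. -/
def letterSign (R : Type*) [Ring R] (x : α × Bool) : R := if x.2 then 1 else -1

theorem letterSign_not (x : α × Bool) : letterSign R (x.1, !x.2) = -letterSign R x := by
  obtain ⟨a, b⟩ := x
  cases b <;> simp [letterSign]

theorem letterSign_mul_eq_zero_iff {x : α × Bool} {c : R} : letterSign R x * c = 0 ↔ c = 0 := by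
  obtain ⟨a, b⟩ := x
  cases b <;> simp [letterSign]

/-- The `1`-chain of the Cayley graph of `π` carried by the path from `v` spelling `l`. -/
noncomputable def pathFlow (R : Type*) [Ring R] : Q → List (α × Bool) → Q × α →₀ R
  | _, [] => 0
  | v, x :: l => .single (dartEdge π v x) (letterSign R x) +
      pathFlow R (v * π (FreeGroup.mk [x])) l

theorem pathFlow_append (v : Q) (l l' : List (α × Bool)) :
    pathFlow π R v (l ++ l') =
      pathFlow π R v l + pathFlow π R (v * π (FreeGroup.mk l)) l' := by
  induction l generalizing v with
  | nil => simp [pathFlow, ← FreeGroup.one_eq_mk]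
  | cons x l ih =>
    rw [List.cons_append, pathFlow, ih, pathFlow, freeGroup_mk_cons x l, map_mul, mul_assoc,
      add_assoc]

theorem pathFlow_eq_of_step (v : Q) {l l' : List (α × Bool)} (h : FreeGroup.Red.Step l l') :
    pathFlow π R v l = pathFlow π R v l' := by
  obtain @⟨l₁, l₂, a, b⟩ := h
  have hback (u : Q) : dartEdge π (u * π (FreeGroup.mk [(a, b)])) (a, !b) = dartEdge π u (a, b) :=
    ((dartEdge_eq_dartEdge_iff π).2 (.inr ⟨rfl, rfl⟩)).symm
  rw [pathFlow_append, pathFlow_append, pathFlow, pathFlow, hback, letterSign_not (a, b),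
    Finsupp.single_neg, add_neg_cancel_left, freeGroup_mk_singleton_not, map_inv,
    mul_inv_cancel_right]

/-- The `1`-chain `pathFlow`, which depends only on the class of the path in the free group. -/
noncomputable def flow (R : Type*) [Ring R] (v : Q) (w : FreeGroup α) : Q × α →₀ R :=
  Quot.lift (pathFlow π R v) (fun _ _ h ↦ pathFlow_eq_of_step π v h) w

theorem flow_mk (v : Q) (l : List (α × Bool)) :
    flow π R v (FreeGroup.mk l) = pathFlow π R v l :=
  rfl

theorem flow_one (v : Q) : flow π R v 1 = 0 := by
  rw [FreeGroup.one_eq_mk, flow_mk, pathFlow]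

theorem flow_of (v : Q) (a : α) : flow π R v (FreeGroup.of a) = .single (v, a) 1 := by
  simp [FreeGroup.of, flow_mk, pathFlow, dartEdge, letterSign]

theorem flow_mul (v : Q) (w w' : FreeGroup α) :
    flow π R v (w * w') = flow π R v w + flow π R (v * π w) w' := by
  obtain ⟨l, rfl⟩ := Quot.exists_rep w
  obtain ⟨l', rfl⟩ := Quot.exists_rep w'
  exact pathFlow_append π v l l'

theorem mem_pathEdges_of_mem_support_pathFlow {v : Q} {l : List (α × Bool)} {e : Q × α}
    (he : e ∈ (pathFlow π R v l).support) : e ∈ pathEdges π v l := by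
  classical
  induction l generalizing v with
  | nil => simp [pathFlow] at he
  | cons x l ih =>
    obtain he | he := Finset.mem_union.1 (Finsupp.support_add he)
    · rw [Finset.mem_singleton.1 (Finsupp.support_single_subset he)]
      exact List.mem_cons_self
    · exact List.mem_cons_of_mem _ (ih he)

theorem card_support_flow_le_norm [DecidableEq α] (v : Q) (w : FreeGroup α) :
    (flow π R v w).support.card ≤ w.norm := by
  classical
  rw [FreeGroup.norm, ← length_pathEdges π v]
  refine (Finset.card_le_card fun e he ↦ ?_).trans (List.toFinset_card_le _)
  rw [← FreeGroup.mk_toWord (x := w), flow_mk] at he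
  exact List.mem_toFinset.2 (mem_pathEdges_of_mem_support_pathFlow π he)

theorem pathFlow_ne_zero_of_nodup [Nontrivial R] {v : Q} {l : List (α × Bool)} (hne : l ≠ [])
    (hl : (pathEdges π v l).Nodup) : pathFlow π R v l ≠ 0 := by
  classical
  obtain ⟨x, l, rfl⟩ := List.exists_cons_of_ne_nil hne
  have hrest : pathFlow π R (v * π (FreeGroup.mk [x])) l (dartEdge π v x) = 0 :=
    Finsupp.notMem_support_iff.1 fun h ↦
      (List.nodup_cons.1 hl).1 (mem_pathEdges_of_mem_support_pathFlow π h)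
  intro h
  have hval := DFunLike.congr_fun h (dartEdge π v x)
  rw [pathFlow, Finsupp.add_apply, hrest, Finsupp.single_eq_same, add_zero,
    ← mul_one (letterSign R x)] at hval
  exact one_ne_zero (letterSign_mul_eq_zero_iff.1 hval)

variable {π} in
theorem CayleyGirthGT.flow_ne_zero [DecidableEq α] [Nontrivial R] {K : ℕ} (hK : CayleyGirthGT π K)
    (v : Q) {w : FreeGroup α} (hw : w ≠ 1) (hnorm : w.norm ≤ K + 1) : flow π R v w ≠ 0 := by
  rw [← FreeGroup.mk_toWord (x := w), flow_mk]
  exact pathFlow_ne_zero_of_nodup π (by rwa [Ne, FreeGroup.toWord_eq_nil_iff])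
    (hK.nodup_pathEdges v FreeGroup.isReduced_toWord hnorm)

/-- The boundary map from `1`-chains to `0`-chains of the Cayley graph of `π`, with the sign
convention source minus target. -/
noncomputable def boundary (R : Type*) [Ring R] : (Q × α →₀ R) →ₗ[R] Q →₀ R :=
  Finsupp.linearCombination R fun e ↦
    .single e.1 1 - .single (e.1 * π (FreeGroup.of e.2)) 1

theorem boundary_apply [Fintype α] (f : Q × α →₀ R) (v : Q) :
    boundary π R f v = ∑ x, letterSign R x * f (dartEdge π v x) := by
  classical
  induction f using Finsupp.induction_linear with
  | zero => simp
  | add f g hf hg => simp [hf, hg, mul_add, Finset.sum_add_distrib]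
  | single e c =>
    obtain ⟨u, a⟩ := e
    rw [Fintype.sum_prod_type, Finset.sum_eq_single a (fun b _ hb ↦ by
      simp [dartEdge, hb.symm]) (by simp)]
    simp [boundary, dartEdge, letterSign, freeGroup_mk_singleton_false, Finsupp.single_apply,
      sub_eq_add_neg, eq_mul_inv_iff_mul_eq]
    split_ifs <;> simp

theorem boundary_single_letterSign (v : Q) (x : α × Bool) :
    boundary π R (.single (dartEdge π v x) (letterSign R x)) =
      .single v 1 - .single (v * π (FreeGroup.mk [x])) 1 := by
  obtain ⟨a, _ | _⟩ := x
  · simp [boundary, dartEdge, letterSign, freeGroup_mk_singleton_false]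
  · simp [boundary, dartEdge, letterSign, FreeGroup.of]

theorem boundary_flow (v : Q) (w : FreeGroup α) :
    boundary π R (flow π R v w) = .single v 1 - .single (v * π w) 1 := by
  obtain ⟨l, rfl⟩ := Quot.exists_rep w
  change boundary π R (pathFlow π R v l) = .single v 1 - .single (v * π (FreeGroup.mk l)) 1
  induction l generalizing v with
  | nil => simp [pathFlow, ← FreeGroup.one_eq_mk]
  | cons x l ih =>
    rw [pathFlow, map_add, ih, boundary_single_letterSign, freeGroup_mk_cons x l, map_mul,
      mul_assoc, sub_add_sub_cancel]

end Flows

section ShortFlows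

variable {α Q R : Type*} [Group Q] [Ring R] {π : FreeGroup α →* Q} {f : Q × α →₀ R} {v : Q}
  {l l' : List (α × Bool)}

/-- The reduced word `l` spells a path from `v` all of whose edges lie in the support of the
chain `f`. -/
def IsReducedPathIn (π : FreeGroup α →* Q) (f : Q × α →₀ R) (v : Q) (l : List (α × Bool)) : Prop :=
  FreeGroup.IsReduced l ∧ ∀ e ∈ pathEdges π v l, f e ≠ 0

theorem IsReducedPathIn.of_append (h : IsReducedPathIn π f v (l ++ l')) :
    IsReducedPathIn π f v l :=
  ⟨h.1.infix (List.prefix_append l l').isInfix, fun e he ↦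
    h.2 e (by rw [pathEdges_append]; exact List.mem_append_left _ he)⟩

theorem IsReducedPathIn.exists_append_singleton [Finite α] (h : IsReducedPathIn π f v l)
    (hne : l ≠ []) (hb : boundary π R f (v * π (FreeGroup.mk l)) = 0) :
    ∃ x, IsReducedPathIn π f v (l ++ [x]) := by
  classical
  have := Fintype.ofFinite α
  obtain ⟨l, y, rfl⟩ := List.eq_nil_or_concat' l |>.resolve_left hne
  set u := v * π (FreeGroup.mk (l ++ [y])) with hu
  have hend : u = v * π (FreeGroup.mk l) * π (FreeGroup.mk [y]) := by
    rw [hu, ← FreeGroup.mul_mk, map_mul, mul_assoc]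
  have hback : f (dartEdge π u (y.1, !y.2)) ≠ 0 := by
    rw [← (dartEdge_eq_dartEdge_iff π).2 (.inr ⟨hend, rfl⟩)]
    exact h.2 _ (by simp [pathEdges_append, pathEdges])
  obtain ⟨z, hz, hfz⟩ : ∃ z ≠ (y.1, !y.2), f (dartEdge π u z) ≠ 0 := by
    by_contra! hz
    rw [boundary_apply, Finset.sum_eq_single (y.1, !y.2) (fun z _ hzy ↦ by rw [hz z hzy, mul_zero])
      (by simp), letterSign_mul_eq_zero_iff] at hb
    exact hback hb
  refine ⟨z, h.1.append_overlap (L₂ := [y]) ?_ (List.cons_ne_nil _ _), fun e he ↦ ?_⟩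
  · simp only [List.cons_append, List.nil_append, FreeGroup.IsReduced, List.isChain_cons_cons,
      List.isChain_singleton, and_true]
    exact fun hyz ↦ by_contra fun hne ↦ hz (Prod.ext hyz.symm (Bool.eq_not.2 (Ne.symm hne)))
  · rw [pathEdges_append, List.mem_append] at he
    obtain he | he := he
    · exact h.2 e he
    · rwa [List.mem_singleton.1 he]

variable [DecidableEq α] {K : ℕ}

theorem IsReducedPathIn.length_le (hK : CayleyGirthGT π K) (hf : f.support.card ≤ K)
    (h : IsReducedPathIn π f v l) : l.length ≤ K := by
  classical
  by_contra! hlen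
  have htake : IsReducedPathIn π f v (l.take (K + 1)) :=
    IsReducedPathIn.of_append (l' := l.drop (K + 1)) (by rwa [List.take_append_drop])
  have hcard := Finset.card_le_card (s := (pathEdges π v (l.take (K + 1))).toFinset)
    fun e he ↦ Finsupp.mem_support_iff.2 (htake.2 e (List.mem_toFinset.1 he))
  rw [List.toFinset_card_of_nodup (hK.nodup_pathEdges v htake.1 (List.length_take_le _ _)),
    length_pathEdges, List.length_take, min_eq_left hlen] at hcard
  omega

theorem exists_isReducedPathIn_boundary_ne_zero [Finite α] (hK : CayleyGirthGT π K)
    (hf : f.support.card ≤ K) {x : α × Bool} (hx : f (dartEdge π v x) ≠ 0) :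
    ∃ l ≠ [], IsReducedPathIn π f v l ∧ boundary π R f (v * π (FreeGroup.mk l)) ≠ 0 := by
  by_contra! hclosed
  have hlong (n : ℕ) : ∃ l, IsReducedPathIn π f v l ∧ l.length = n + 1 := by
    induction n with
    | zero => exact ⟨[x], ⟨by simp, by simpa [pathEdges] using hx⟩, rfl⟩
    | succ n ih =>
      obtain ⟨l, hl, hlen⟩ := ih
      have hne : l ≠ [] := List.ne_nil_of_length_eq_add_one hlen
      obtain ⟨y, hy⟩ := hl.exists_append_singleton hne (hclosed l hne hl)
      exact ⟨l ++ [y], hy, by simp [hlen]⟩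
  obtain ⟨l, hl, hlen⟩ := hlong K
  have := hl.length_le hK hf
  omega

theorem CayleyGirthGT.eq_zero_of_boundary_eq_zero [Finite α] (hK : CayleyGirthGT π K)
    (hf : f.support.card ≤ K) (hb : boundary π R f = 0) : f = 0 := by
  by_contra hne
  obtain ⟨⟨v, a⟩, he⟩ := Finsupp.ne_iff.1 hne
  obtain ⟨l, -, -, hl⟩ := exists_isReducedPathIn_boundary_ne_zero (v := v) (x := (a, true)) hK hf
    (by simpa [dartEdge] using he)
  exact hl (by rw [hb, Finsupp.zero_apply])

theorem CayleyGirthGT.exists_norm_le_flow_eq [Finite α] [Nontrivial R] (hK : CayleyGirthGT π K)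
    (v : Q) {w : FreeGroup α} (hw : (flow π R v w).support.card ≤ K) :
    ∃ w', w'.norm ≤ K ∧ π w' = π w ∧ flow π R v w' = flow π R v w := by
  classical
  have := Fintype.ofFinite α
  obtain hloop | hloop := eq_or_ne (π w) 1
  · refine ⟨1, by simp, by rw [map_one, hloop], ?_⟩
    rw [flow_one, hK.eq_zero_of_boundary_eq_zero hw]
    rw [boundary_flow, hloop, mul_one, sub_self]
  have hstart : boundary π R (flow π R v w) v ≠ 0 := by
    simp [boundary_flow, hloop]
  rw [boundary_apply] at hstart
  obtain ⟨x, -, hx⟩ := Finset.exists_ne_zero_of_sum_ne_zero hstart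
  obtain ⟨l, hne, hl, hend⟩ := exists_isReducedPathIn_boundary_ne_zero hK hw
    (right_ne_zero_of_mul hx)
  have hlen : l.length ≤ K := hl.length_le hK hw
  have hlw : π (FreeGroup.mk l) = π w := by
    have hl1 : π (FreeGroup.mk l) ≠ 1 := fun h ↦ hne (hK.eq_nil_of_isReduced hl.1 hlen h)
    by_contra hlw
    exact hend (by simp [boundary_flow, hl1, Ne.symm hlw])
  refine ⟨FreeGroup.mk l, FreeGroup.norm_mk_le.trans hlen, hlw, sub_eq_zero.1 ?_⟩
  refine hK.eq_zero_of_boundary_eq_zero ((Finset.card_le_card fun e he ↦ ?_).trans hw)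
    (by rw [map_sub, boundary_flow, boundary_flow, hlw, sub_self])
  obtain he | he := Finset.mem_union.1 (Finsupp.support_sub he)
  · exact Finsupp.mem_support_iff.2 (hl.2 e (mem_pathEdges_of_mem_support_pathFlow π he))
  · exact he

end ShortFlows

section HomologyCover

open scoped commutatorElement

variable {G : Type*} [Group G] (m : ℕ) (N : Subgroup G)

/-- The subgroup `[N, N] N ^ m`, which corresponds to the `ℤ/m`-homology cover of the cover
corresponding to `N`. -/
def homologyCover : Subgroup G :=
  ⁅N, N⁆ ⊔ Subgroup.closure {x | ∃ y ∈ N, x = y ^ m}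

variable {m N} in
theorem pow_mem_homologyCover {y : G} (hy : y ∈ N) : y ^ m ∈ homologyCover m N :=
  le_sup_right (a := ⁅N, N⁆) (Subgroup.subset_closure ⟨y, hy, rfl⟩)

instance homologyCover.normal [N.Normal] : (homologyCover m N).Normal := by
  have hconj : Group.conjugatesOfSet {x | ∃ y ∈ N, x = y ^ m} ⊆ {x | ∃ y ∈ N, x = y ^ m} := by
    intro x hx
    obtain ⟨_, ⟨y, hy, rfl⟩, hc⟩ := Group.mem_conjugatesOfSet_iff.1 hx
    obtain ⟨c, rfl⟩ := isConj_iff.1 hc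
    exact ⟨c * y * c⁻¹, Subgroup.Normal.conj_mem ‹_› y hy c, conj_pow.symm⟩
  have hclosure : (Subgroup.closure {x | ∃ y ∈ N, x = y ^ m}).Normal := by
    rw [Group.subset_conjugatesOfSet.antisymm hconj]
    exact Subgroup.normalClosure_normal
  exact Subgroup.sup_normal _ _

variable {m N} in
theorem homologyCover_le_map_ker {A : Type*} [CommGroup A] (hA : ∀ a : A, a ^ m = 1)
    (φ : N →* A) : homologyCover m N ≤ φ.ker.map N.subtype := by
  refine sup_le (Subgroup.commutator_le.2 fun x hx y hy ↦ ?_)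
    ((Subgroup.closure_le _).2 fun _ ⟨y, hy, hx⟩ ↦ ?_)
  · refine ⟨⁅(⟨x, hx⟩ : N), ⟨y, hy⟩⁆, ?_, rfl⟩
    rw [SetLike.mem_coe, MonoidHom.mem_ker, map_commutatorElement,
      commutatorElement_eq_one_iff_mul_comm, mul_comm]
  · refine ⟨(⟨y, hy⟩ : N) ^ m, ?_, hx.symm⟩
    rw [SetLike.mem_coe, MonoidHom.mem_ker, map_pow, hA]

instance homologyCover.commGroup [N.Normal] :
    CommGroup (N ⧸ (homologyCover m N).subgroupOf N) where
  mul_comm a b := by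
    obtain ⟨x, rfl⟩ := QuotientGroup.mk'_surjective _ a
    obtain ⟨y, rfl⟩ := QuotientGroup.mk'_surjective _ b
    rw [← commutatorElement_eq_one_iff_mul_comm, ← map_commutatorElement, QuotientGroup.mk'_apply,
      QuotientGroup.eq_one_iff]
    exact le_sup_left (a := ⁅N, N⁆) (Subgroup.commutator_mem_commutator x.2 y.2)

variable {m N} in
theorem pow_eq_one_of_homologyCover [N.Normal] (a : N ⧸ (homologyCover m N).subgroupOf N) :
    a ^ m = 1 := by
  obtain ⟨y, rfl⟩ := QuotientGroup.mk_surjective a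
  exact (QuotientGroup.eq_one_iff (y ^ m)).2 (pow_mem_homologyCover y.2)

end HomologyCover

section FlowVanishing

variable {α Q R : Type*} [Group Q] {π : FreeGroup α →* Q} [Ring R] {m : ℕ}

theorem flow_eq_zero_of_mem_homologyCover [CharP R m] {w : FreeGroup α}
    (hw : w ∈ homologyCover m π.ker) (v : Q) : flow π R v w = 0 := by
  let φ : π.ker →* Multiplicative (Q × α →₀ R) :=
    { toFun := fun w ↦ .ofAdd (flow π R v w)
      map_one' := congrArg _ (flow_one π v)
      map_mul' := fun x y ↦ congrArg Multiplicative.ofAdd <|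
        (flow_mul π v x y).trans (by rw [π.mem_ker.1 x.2, mul_one]; rfl) }
  have hexp (f : Multiplicative (Q × α →₀ R)) : f ^ m = 1 := by
    refine Multiplicative.toAdd.injective ?_
    rw [toAdd_pow, ← Nat.cast_smul_eq_nsmul R, CharP.cast_eq_zero, zero_smul, toAdd_one]
  obtain ⟨x, hx, rfl⟩ := homologyCover_le_map_ker hexp φ hw
  exact Multiplicative.ofAdd.injective hx

theorem eq_linearCombination_flow {A : Type*} [AddCommGroup A] [Module R A]
    {c : Q → FreeGroup α → A} (hc : ∀ u w w', c u (w * w') = c u w + c (u * π w) w') (v : Q)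
    (w : FreeGroup α) :
    c v w = Finsupp.linearCombination R (fun e ↦ c e.1 (FreeGroup.of e.2)) (flow π R v w) := by
  have hone (u : Q) : c u 1 = 0 := by simpa using hc u 1 1
  induction w using FreeGroup.induction_on generalizing v with
  | C1 => rw [hone, flow_one, map_zero]
  | of a => rw [flow_of, Finsupp.linearCombination_single, one_smul]
  | inv_of a ih =>
    have hcancel := hc v (FreeGroup.of a)⁻¹ (FreeGroup.of a)
    have hflow := flow_mul π (R := R) v (FreeGroup.of a)⁻¹ (FreeGroup.of a)
    rw [inv_mul_cancel, hone, eq_comm, add_eq_zero_iff_eq_neg] at hcancel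
    rw [inv_mul_cancel, flow_one, eq_comm, add_eq_zero_iff_eq_neg] at hflow
    rw [hcancel, hflow, map_neg, ih]
  | mul w w' ih ih' => rw [hc, flow_mul, map_add, ih, ih']

theorem mem_homologyCover_of_flow_eq_zero (hπ : Function.Surjective π) {v : Q} {w : FreeGroup α}
    (hw : π w = 1) (hflow : flow π (ZMod m) v w = 0) : w ∈ homologyCover m π.ker := by
  let A := Additive (π.ker ⧸ (homologyCover m π.ker).subgroupOf π.ker)
  let _ : Module (ZMod m) A := AddCommGroup.zmodModule fun a ↦
    congrArg Additive.ofMul (pow_eq_one_of_homologyCover a.toMul)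
  obtain ⟨t, ht⟩ := hπ.hasRightInverse
  let loop (u : Q) (w : FreeGroup α) : π.ker :=
    ⟨t u * w * (t (u * π w))⁻¹, by simp [MonoidHom.mem_ker, ht _]⟩
  let c (u : Q) (w : FreeGroup α) : A := .ofMul (loop u w)
  have hc (u : Q) (w w' : FreeGroup α) : c u (w * w') = c u w + c (u * π w) w' := by
    have hloop : loop u (w * w') = loop u w * loop (u * π w) w' :=
      Subtype.ext (by simp [loop, mul_assoc])
    exact congrArg (fun x : π.ker ↦ (Additive.ofMul (x : π.ker ⧸ _) : A)) hloop
  have hzero : c v w = 0 := by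
    rw [eq_linearCombination_flow (R := ZMod m) hc, hflow, LinearMap.map_zero]
  have hconj : t v * w * (t v)⁻¹ ∈ homologyCover m π.ker := by
    have hmem : t v * w * (t (v * π w))⁻¹ ∈ homologyCover m π.ker :=
      (QuotientGroup.eq_one_iff (loop v w)).1 (congrArg Additive.toMul hzero)
    rwa [hw, mul_one] at hmem
  simpa [mul_assoc] using (homologyCover.normal m π.ker).conj_mem _ hconj (t v)⁻¹

theorem mk_homologyCover_eq_of_flow_eq {N : Subgroup (FreeGroup α)} [N.Normal]
    {v : FreeGroup α ⧸ N} {u w : FreeGroup α}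
    (h : QuotientGroup.mk' N u = QuotientGroup.mk' N w)
    (hflow : flow (QuotientGroup.mk' N) (ZMod m) v u = flow (QuotientGroup.mk' N) (ZMod m) v w) :
    QuotientGroup.mk' (homologyCover m N) u = QuotientGroup.mk' (homologyCover m N) w := by
  refine QuotientGroup.eq.2 ?_
  rw [← QuotientGroup.ker_mk' N]
  refine mem_homologyCover_of_flow_eq_zero (QuotientGroup.mk'_surjective N)
    (v := v * QuotientGroup.mk' N u) (by rw [map_mul, map_inv, h, inv_mul_cancel]) ?_
  have hmul := flow_mul (QuotientGroup.mk' N) (R := ZMod m) v u (u⁻¹ * w)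
  rwa [mul_inv_cancel_left, hflow, left_eq_add] at hmul

end FlowVanishing

section CoverFlow

variable {α : Type*} {m : ℕ} {N : Subgroup (FreeGroup α)} [N.Normal]

variable (m N) in
/-- The flow, in the Cayley graph of `FreeGroup α ⧸ N`, of any path from `1` whose lift to the
`ℤ/m`-homology cover ends at `x`. -/
noncomputable def coverFlow (x : FreeGroup α ⧸ homologyCover m N) :
    (FreeGroup α ⧸ N) × α →₀ ZMod m :=
  flow (QuotientGroup.mk' N) (ZMod m) 1 x.out

theorem coverFlow_mk (w : FreeGroup α) :
    coverFlow m N (QuotientGroup.mk' (homologyCover m N) w) =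
      flow (QuotientGroup.mk' N) (ZMod m) 1 w := by
  obtain ⟨⟨h, hh⟩, hout⟩ := QuotientGroup.mk_out_eq_mul (homologyCover m N) w
  rw [coverFlow, QuotientGroup.mk'_apply, hout, flow_mul, flow_eq_zero_of_mem_homologyCover
    (w := h) (by rwa [QuotientGroup.ker_mk']), add_zero]

theorem coverFlow_mk_mul_sub_coverFlow_mk (u w : FreeGroup α) :
    coverFlow m N (QuotientGroup.mk' (homologyCover m N) (u * w)) -
        coverFlow m N (QuotientGroup.mk' (homologyCover m N) u) =
      flow (QuotientGroup.mk' N) (ZMod m) (QuotientGroup.mk' N u) w := by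
  rw [coverFlow_mk, coverFlow_mk, flow_mul, one_mul, add_sub_cancel_left]

theorem card_support_coverFlow_sub_le [DecidableEq α] (x y : FreeGroup α ⧸ homologyCover m N) :
    (coverFlow m N y - coverFlow m N x).support.card ≤
      quotNorm (QuotientGroup.mk' (homologyCover m N)) (x⁻¹ * y) := by
  obtain ⟨u, rfl⟩ := QuotientGroup.mk'_surjective _ x
  obtain ⟨w, hw, hnorm⟩ := exists_norm_eq_quotNorm
    (QuotientGroup.mk'_surjective (homologyCover m N)) ((QuotientGroup.mk' _ u)⁻¹ * y)
  obtain rfl : y = QuotientGroup.mk' _ (u * w) := by rw [map_mul, hw, mul_inv_cancel_left]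
  rw [coverFlow_mk_mul_sub_coverFlow_mk, ← hnorm]
  exact card_support_flow_le_norm _ _ w

theorem CayleyGirthGT.quotNorm_le_of_card_support_coverFlow_sub_le [Finite α] [DecidableEq α]
    [Nontrivial (ZMod m)] {K : ℕ} (hK : CayleyGirthGT (QuotientGroup.mk' N) K)
    {x y : FreeGroup α ⧸ homologyCover m N}
    (hxy : (coverFlow m N y - coverFlow m N x).support.card ≤ K) :
    quotNorm (QuotientGroup.mk' (homologyCover m N)) (x⁻¹ * y) ≤ K := by
  obtain ⟨u, rfl⟩ := QuotientGroup.mk'_surjective _ x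
  obtain ⟨w, hw⟩ := QuotientGroup.mk'_surjective _ ((QuotientGroup.mk' _ u)⁻¹ * y)
  obtain rfl : y = QuotientGroup.mk' _ (u * w) := by rw [map_mul, hw, mul_inv_cancel_left]
  rw [coverFlow_mk_mul_sub_coverFlow_mk] at hxy
  obtain ⟨w', hnorm, hmap, hflow⟩ := hK.exists_norm_le_flow_eq _ hxy
  rw [← hw, ← mk_homologyCover_eq_of_flow_eq hmap hflow]
  exact (quotNorm_map_le _ w').trans hnorm

theorem finite_quotient_homologyCover [Finite α] [NeZero m] [Finite (FreeGroup α ⧸ N)] :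
    Finite (FreeGroup α ⧸ homologyCover m N) := by
  have : Finite ((FreeGroup α ⧸ N) × α →₀ ZMod m) := Finite.of_injective _ DFunLike.coe_injective
  refine Finite.of_injective (fun x ↦ (QuotientGroup.mk' N x.out, coverFlow m N x)) fun x y hxy ↦ ?_
  rw [← x.out_eq, ← y.out_eq]
  exact mk_homologyCover_eq_of_flow_eq (congrArg Prod.fst hxy) (congrArg Prod.snd hxy)

theorem CayleyGirthGT.mk_homologyCover [DecidableEq α] [Nontrivial (ZMod m)] {K : ℕ}
    (hK : CayleyGirthGT (QuotientGroup.mk' N) K) :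
    CayleyGirthGT (QuotientGroup.mk' (homologyCover m N)) (K + 1) := by
  intro w hw hone
  by_contra! hnorm
  have hmem : w ∈ homologyCover m (QuotientGroup.mk' N).ker := by
    rw [QuotientGroup.ker_mk']
    exact (QuotientGroup.eq_one_iff w).1 hw
  exact hK.flow_ne_zero (R := ZMod m) 1 hone hnorm (flow_eq_zero_of_mem_homologyCover hmem 1)

end CoverFlow

section BoxSpaces

variable {α : Type*}

theorem CayleyGirthGT.le_spaceDiam [DecidableEq α] [Nonempty α] {N : Subgroup (FreeGroup α)}
    [N.Normal] [Finite (FreeGroup α ⧸ N)] {k : ℕ}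
    (hgirth : CayleyGirthGT (QuotientGroup.mk' N) (2 * k)) :
    (k : ℝ) ≤ spaceDiam fun x y : FreeGroup α ⧸ N ↦
      (quotWordDist (Set.range (FreeGroup.of : α → FreeGroup α)) N x y : ℝ) := by
  obtain ⟨a⟩ := ‹Nonempty α›
  have hnorm : (FreeGroup.of a ^ k).norm = k := FreeGroup.norm_of_pow a k
  refine le_csSup (Set.finite_range _).bddAbove
    ⟨(1, QuotientGroup.mk' N (FreeGroup.of a ^ k)), congrArg Nat.cast ?_⟩
  rw [quotWordDist_range_of_eq_quotNorm, inv_one, one_mul, hgirth.quotNorm_map_eq (by rw [hnorm]),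
    hnorm]

/-- `D` makes the disjoint union of the quotients of the free group by the subgroups `N i` into
their box space, with respect to the free basis. -/
def IsBoxSpaceOf (N : ℕ → Subgroup (FreeGroup α))
    (D : (Σ i, FreeGroup α ⧸ N i) → (Σ i, FreeGroup α ⧸ N i) → ℝ) : Prop :=
  IsCoarseDisjointUnionOf
    (fun i x y ↦ (quotWordDist (Set.range (FreeGroup.of : α → FreeGroup α)) (N i) x y : ℝ)) D

variable {N : ℕ → Subgroup (FreeGroup α)} [∀ i, (N i).Normal]
  {D : (Σ i, FreeGroup α ⧸ N i) → (Σ i, FreeGroup α ⧸ N i) → ℝ}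

theorem IsBoxSpaceOf.apply_eq_quotNorm [DecidableEq α] (hD : IsBoxSpaceOf N D) {i : ℕ}
    (x y : FreeGroup α ⧸ N i) :
    D ⟨i, x⟩ ⟨i, y⟩ = quotNorm (QuotientGroup.mk' (N i)) (x⁻¹ * y) :=
  (hD.1 i x y).trans (congrArg Nat.cast (quotWordDist_range_of_eq_quotNorm (N i) x y))

variable [∀ i, Finite (FreeGroup α ⧸ N i)]

theorem IsBoxSpaceOf.separatedComponents [DecidableEq α] [Nonempty α] (hD : IsBoxSpaceOf N D)
    (hgirth : ∀ K, ∀ᶠ i in atTop, CayleyGirthGT (QuotientGroup.mk' (N i)) K) :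
    SeparatedComponents D := by
  refine IsCoarseDisjointUnionOf.separatedComponents hD (tendsto_atTop.2 fun R ↦ ?_)
  filter_upwards [hgirth (2 * ⌈R⌉₊)] with i hi
  exact (Nat.le_ceil R).trans hi.le_spaceDiam

theorem IsBoxSpaceOf.boundedGeometry [Finite α] (hD : IsBoxSpaceOf N D)
    (hsep : SeparatedComponents D) : BoundedGeometry D := by
  classical
  refine hsep.boundedGeometry fun R ↦ ⟨{w : FreeGroup α | w.norm ≤ ⌊R⌋₊}.ncard, fun i x ↦ ?_⟩
  have hfin := finite_setOf_freeGroup_norm_le (α := α) ⌊R⌋₊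
  have hsub : {y | D ⟨i, x⟩ ⟨i, y⟩ ≤ R} ⊆
      (fun w ↦ x * QuotientGroup.mk' (N i) w) '' {w | w.norm ≤ ⌊R⌋₊} := by
    intro y hy
    rw [Set.mem_ofPred_eq, hD.apply_eq_quotNorm] at hy
    obtain ⟨w, hw, hnorm⟩ := exists_norm_eq_quotNorm (QuotientGroup.mk'_surjective (N i)) (x⁻¹ * y)
    exact ⟨w, Nat.le_floor (hnorm ▸ hy), by beta_reduce; rw [hw, mul_inv_cancel_left]⟩
  exact (Set.ncard_le_ncard hsub (hfin.image _)).trans (Set.ncard_image_le hfin)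

theorem IsBoxSpaceOf.not_hasPropertyA [Finite α] [Nontrivial α] [DecidableEq α]
    (hD : IsBoxSpaceOf N D)
    (hgirth : ∀ K, ∀ᶠ i in atTop, CayleyGirthGT (QuotientGroup.mk' (N i)) K) :
    ¬ HasPropertyA D := by
  intro hA
  let _ := Fintype.ofFinite α
  let _ (i : ℕ) := Fintype.ofFinite (FreeGroup α ⧸ N i)
  obtain ⟨S, hS⟩ := hA.exists_eventually_component (hD.separatedComponents hgirth) one_pos
    (ε := 1 / 16) (by norm_num)
  obtain ⟨i, ⟨φ, hunit, hclose, hsupp⟩, hi⟩ := (hS.and (hgirth (2 * ⌊S⌋₊ + 2))).exists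
  simp only [hD.apply_eq_quotNorm] at hclose hsupp
  have hcard := hi.two_mul_card_mul_le (QuotientGroup.mk'_surjective (N i)) (ε := 1 / 16) hunit
    (fun x y hxy ↦ Nat.le_floor (hsupp x y hxy)) fun x a ↦ ?_
  · have : (2 : ℝ) ≤ Fintype.card α := mod_cast Fintype.one_lt_card (α := α)
    linarith
  · have hnorm := (quotNorm_map_le (QuotientGroup.mk' (N i)) (FreeGroup.of a)).trans_eq
      (FreeGroup.norm_of a)
    have := hclose x (x * QuotientGroup.mk' (N i) (FreeGroup.of a))
      (by rw [inv_mul_cancel_left]; exact_mod_cast hnorm)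
    linarith [(abs_le.1 this).2]

end BoxSpaces

section DerivedSeries

variable {α : Type*} {m : ℕ}

instance derivedMSeries.normal {G : Type*} [Group G] (m : ℕ) :
    ∀ i, (derivedMSeries G m i).Normal
  | 0 => inferInstanceAs (⊤ : Subgroup G).Normal
  | i + 1 =>
    have := derivedMSeries.normal (G := G) m i
    homologyCover.normal m (derivedMSeries G m i)

theorem cayleyGirthGT_mk_derivedMSeries [DecidableEq α] [Nontrivial (ZMod m)] (i : ℕ) :
    CayleyGirthGT (QuotientGroup.mk' (derivedMSeries (FreeGroup α) m i)) i := by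
  induction i with
  | zero => exact fun w _ hw ↦ Nat.pos_of_ne_zero (FreeGroup.norm_eq_zero.not.2 hw)
  | succ i ih => exact ih.mk_homologyCover

theorem eventually_cayleyGirthGT_mk_derivedMSeries [DecidableEq α] [Nontrivial (ZMod m)] (K : ℕ) :
    ∀ᶠ i in atTop, CayleyGirthGT (QuotientGroup.mk' (derivedMSeries (FreeGroup α) m i)) K :=
  (eventually_ge_atTop K).mono fun i hi ↦ (cayleyGirthGT_mk_derivedMSeries i).mono hi

instance finite_quotient_derivedMSeries [Finite α] [NeZero m] (i : ℕ) :
    Finite (FreeGroup α ⧸ derivedMSeries (FreeGroup α) m i) := by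
  induction i with
  | zero =>
    have : Subsingleton (FreeGroup α ⧸ derivedMSeries (FreeGroup α) m 0) :=
      QuotientGroup.subsingleton_quotient_top
    infer_instance
  | succ i ih => exact finite_quotient_homologyCover

/-- The flow of a point of the `i`-th quotient by the derived `m`-series in the Cayley graph of the
quotient below it; nothing lies below level `0`, where the value is `0`. -/
noncomputable def derivedFlow : ∀ i, FreeGroup α ⧸ derivedMSeries (FreeGroup α) m i →
    (FreeGroup α ⧸ derivedMSeries (FreeGroup α) m (i - 1)) × α →₀ ZMod m
  | 0, _ => 0
  | i + 1, x => coverFlow m (derivedMSeries (FreeGroup α) m i) x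

theorem card_support_derivedFlow_sub_le [DecidableEq α] {i : ℕ}
    (x y : FreeGroup α ⧸ derivedMSeries (FreeGroup α) m i) :
    (derivedFlow i y - derivedFlow i x).support.card ≤
      quotNorm (QuotientGroup.mk' (derivedMSeries (FreeGroup α) m i)) (x⁻¹ * y) := by
  cases i with
  | zero => simp [derivedFlow]
  | succ i => exact card_support_coverFlow_sub_le x y

theorem quotNorm_le_of_card_support_derivedFlow_sub_le [Finite α] [DecidableEq α]
    [Nontrivial (ZMod m)] {i K : ℕ} (hi : K < i)
    {x y : FreeGroup α ⧸ derivedMSeries (FreeGroup α) m i}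
    (hxy : (derivedFlow i y - derivedFlow i x).support.card ≤ K) :
    quotNorm (QuotientGroup.mk' (derivedMSeries (FreeGroup α) m i)) (x⁻¹ * y) ≤ K := by
  cases i with
  | zero => exact absurd hi K.not_lt_zero
  | succ i =>
    have hgirth := (cayleyGirthGT_mk_derivedMSeries (m := m) (α := α) i).mono (Nat.lt_succ_iff.1 hi)
    exact hgirth.quotNorm_le_of_card_support_coverFlow_sub_le hxy

theorem IsBoxSpaceOf.exists_coarseEmbeddingWith_derivedMSeries [Finite α] [NeZero m]
    [Nontrivial (ZMod m)]
    {D : (Σ i, FreeGroup α ⧸ derivedMSeries (FreeGroup α) m i) →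
      (Σ i, FreeGroup α ⧸ derivedMSeries (FreeGroup α) m i) → ℝ}
    (hD : IsBoxSpaceOf (derivedMSeries (FreeGroup α) m) D) (hsep : SeparatedComponents D) :
    ∃ F : (Σ i, FreeGroup α ⧸ derivedMSeries (FreeGroup α) m i) → lp (fun _ : ℕ ↦ ℝ) 2,
      CoarseEmbeddingWith D (fun a b ↦ dist a b) F := by
  classical
  refine hsep.exists_coarseEmbeddingWith (fun i x ↦ (derivedFlow i x).graph)
    (fun R ↦ ⟨2 * ⌊R⌋₊, .of_forall fun i x y hxy ↦ ?_⟩) fun C ↦ ⟨C, ?_⟩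
  · rw [hD.apply_eq_quotNorm] at hxy
    rw [symmDiff_comm]
    exact (card_graph_symmDiff_le_two_mul _ _).trans <| Nat.mul_le_mul_left 2 <|
      (card_support_derivedFlow_sub_le x y).trans (Nat.le_floor hxy)
  · filter_upwards [eventually_gt_atTop C] with i hi x y hxy
    rw [symmDiff_comm] at hxy
    rw [hD.apply_eq_quotNorm, Nat.cast_le]
    exact quotNorm_le_of_card_support_derivedFlow_sub_le hi
      ((card_support_sub_le_card_graph_symmDiff _ _).trans hxy)

end DerivedSeries

theorem box_space_embeds_but_no_property_A_general {α : Type*} [Finite α] [Nontrivial α] {m : ℕ}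
    (hm : 2 ≤ m)
    {D : (Σ i, FreeGroup α ⧸ derivedMSeries (FreeGroup α) m i) →
      (Σ i, FreeGroup α ⧸ derivedMSeries (FreeGroup α) m i) → ℝ}
    (hD : IsBoxSpaceOf (derivedMSeries (FreeGroup α) m) D) :
    BoundedGeometry D ∧
    (∃ F : (Σ i, FreeGroup α ⧸ derivedMSeries (FreeGroup α) m i) → lp (fun _ : ℕ ↦ ℝ) 2,
      CoarseEmbeddingWith D (fun a b ↦ dist a b) F) ∧
    ¬ HasPropertyA D := by
  classical
  have : NeZero m := ⟨by lia⟩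
  have : Nontrivial (ZMod m) := ZMod.nontrivial_iff.2 (by lia)
  have hgirth := eventually_cayleyGirthGT_mk_derivedMSeries (α := α) (m := m)
  have hsep := hD.separatedComponents hgirth
  exact ⟨hD.boundedGeometry hsep, hD.exists_coarseEmbeddingWith_derivedMSeries hsep,
    hD.not_hasPropertyA hgirth⟩

/-- For `n ≥ 2` and an integer `m ≥ 3`, the box space of the free group `F_n` corresponding
to the derived `m`-series is a bounded geometry metric space which coarsely embeds into the
Hilbert space `ℓ²(ℕ, ℝ)` but does not have Yu's property A. -/
theorem box_space_embeds_but_no_property_A (n m : ℕ) (hn : 2 ≤ n) (hm : 3 ≤ m)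
    (D : (Σ i : ℕ, FreeGroup (Fin n) ⧸ derivedMSeries (FreeGroup (Fin n)) m i) →
         (Σ i : ℕ, FreeGroup (Fin n) ⧸ derivedMSeries (FreeGroup (Fin n)) m i) → ℝ)
    (hmet : IsMetricOn D)
    (hbox : IsCoarseDisjointUnionOf (fun i x y =>
      (quotWordDist (Set.range (FreeGroup.of : Fin n → FreeGroup (Fin n)))
        (derivedMSeries (FreeGroup (Fin n)) m i) x y : ℝ)) D) :
    BoundedGeometry D ∧
    (∃ F : (Σ i : ℕ, FreeGroup (Fin n) ⧸ derivedMSeries (FreeGroup (Fin n)) m i) →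
        lp (fun _ : ℕ => ℝ) 2,
      CoarseEmbeddingWith D (fun a b => dist a b) F) ∧
    ¬ HasPropertyA D := by
  have := Fin.nontrivial_iff_two_le.2 hn
  exact box_space_embeds_but_no_property_A_general (by lia) hbox
end

section
/- Let m ≥ 3 be an integer. There exist non-decreasing functions ρ₋, ρ₊: [0,∞) → [0,∞) tending to ∞, depending only on m, with the following property: for every finite connected 2-connected graph X such that the number N of maximal spanning trees of X not containing a given edge is independent of the edge, the ℤ_m-homology cover X̃ of X admits a map F: X̃ → ℓ²(ℕ,ℝ) satisfying ρ₋(d_Q(x,y)) ≤ ‖F(x) − F(y)‖ ≤ ρ₊(d_Q(x,y)) for all x,y ∈ X̃, where d_Q is the spanning-tree pseudometric on X̃. -/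
open Filter
open scoped ENNReal NNReal

namespace MultiGraph

variable {V E : Type*}

/-- The initial vertex of a step traversing the edge `s.1` forwards (`s.2 = true`) or
backwards (`s.2 = false`). -/
def stepSrc (src tgt : E → V) (s : E × Bool) : V := if s.2 then src s.1 else tgt s.1

/-- The terminal vertex of a step. -/
def stepTgt (src tgt : E → V) (s : E × Bool) : V := if s.2 then tgt s.1 else src s.1

/-- `p` is a walk from `a` to `b` in the multigraph with edge endpoint maps `src`, `tgt`. -/
def IsWalk (src tgt : E → V) : V → V → List (E × Bool) → Prop
  | a, b, [] => a = b
  | a, b, s :: p => stepSrc src tgt s = a ∧ IsWalk src tgt (stepTgt src tgt s) b p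

/-- The multigraph is connected. -/
def Connected (src tgt : E → V) : Prop := ∀ a b : V, ∃ p, IsWalk src tgt a b p

/-- The graph distance between two vertices (with junk value if there is no walk). -/
noncomputable def gdist (src tgt : E → V) (a b : V) : ℕ :=
  sInf {n | ∃ p, IsWalk src tgt a b p ∧ p.length = n}

/-- A cycle based at `a`: a nonempty closed walk repeating no edge and no vertex. -/
def IsCycle (src tgt : E → V) (a : V) (p : List (E × Bool)) : Prop :=
  IsWalk src tgt a a p ∧ p ≠ [] ∧ (p.map Prod.fst).Nodup ∧ (p.map (stepSrc src tgt)).Nodup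

/-- The girth: the length of a shortest cycle (`⊤` if there are no cycles). -/
noncomputable def girth (src tgt : E → V) : ℕ∞ :=
  sInf {n : ℕ∞ | ∃ (a : V) (p : List (E × Bool)), IsCycle src tgt a p ∧ (p.length : ℕ∞) = n}

/-- Removing any single edge leaves the graph connected. -/
def TwoConnected (src tgt : E → V) : Prop :=
  ∀ (e : E) (a b : V), ∃ p, IsWalk src tgt a b p ∧ ∀ s ∈ p, s.1 ≠ e

/-- `T` is the edge set of a maximal spanning tree: every pair of vertices is joined by a
walk through `T`, and every cycle of the graph uses an edge outside `T`. -/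
def IsSpanningTree (src tgt : E → V) (T : Set E) : Prop :=
  (∀ a b : V, ∃ p, IsWalk src tgt a b p ∧ ∀ s ∈ p, s.1 ∈ T) ∧
  ∀ (a : V) (p : List (E × Bool)), IsCycle src tgt a p → ∃ s ∈ p, s.1 ∉ T

/-- The number `N_e` of maximal spanning trees avoiding the edge `e`. -/
noncomputable def numTreesAvoiding (src tgt : E → V) (e : E) : ℕ :=
  Nat.card {T : Set E // IsSpanningTree src tgt T ∧ e ∉ T}

open Classical in
/-- A chosen geodesic from `a` to `b` (junk value `[]` if there is no walk). -/
noncomputable def geod (src tgt : E → V) (a b : V) : List (E × Bool) :=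
  if h : ∃ p, IsWalk src tgt a b p ∧ p.length = gdist src tgt a b then h.choose else []

open Classical in
/-- The number of times the walk `p` traverses the edge `e` in the positive direction. -/
noncomputable def countF (e : E) (p : List (E × Bool)) : ℕ :=
  (p.filter fun s => s.1 = e ∧ s.2 = true).length

open Classical in
/-- The number of times the walk `p` traverses the edge `e` in the negative direction. -/
noncomputable def countB (e : E) (p : List (E × Bool)) : ℕ :=
  (p.filter fun s => s.1 = e ∧ s.2 = false).length

/-- Two walks are `m`-congruent if for every edge the signed numbers of traversals agree
modulo `m`. -/
def MCongruent (m : ℕ) (p₁ p₂ : List (E × Bool)) : Prop :=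
  ∀ e : E, ((countF e p₁ : ℤ) - (countB e p₁ : ℤ)) ≡
    ((countF e p₂ : ℤ) - (countB e p₂ : ℤ)) [ZMOD (m : ℤ)]

/-- A walk has no backtrack if no step is immediately followed by the same edge reversed. -/
def NoBacktrack (p : List (E × Bool)) : Prop :=
  List.Chain' (fun s s' => ¬(s'.1 = s.1 ∧ s'.2 = !s.2)) p

section Cover

open Classical in
/-- The image in `(ℤ/m)^{E ∖ T₀}` of the generator of `π₁` corresponding to the edge `e`
(trivial if `e` lies in the maximal spanning tree `T₀`). -/
noncomputable def coverRho (m : ℕ) (T₀ : Set E) (e : E) : {e' : E // e' ∉ T₀} → ZMod m :=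
  fun f => if f.1 = e then 1 else 0

/-- Source map of the `ℤ/m`-homology cover built from the maximal spanning tree `T₀`:
the lift `(e, k)` of the edge `e` starts at `(src e, k)`. -/
def coverSrc (m : ℕ) (src : E → V) (T₀ : Set E) :
    E × ({e' : E // e' ∉ T₀} → ZMod m) → V × ({e' : E // e' ∉ T₀} → ZMod m) :=
  fun ek => (src ek.1, ek.2)

/-- Target map of the `ℤ/m`-homology cover: the lift `(e, k)` of the edge `e` ends at
`(tgt e, k + ρ(e))`. -/
noncomputable def coverTgt (m : ℕ) (tgt : E → V) (T₀ : Set E) :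
    E × ({e' : E // e' ∉ T₀} → ZMod m) → V × ({e' : E // e' ∉ T₀} → ZMod m) :=
  fun ek => (tgt ek.1, ek.2 + coverRho m T₀ ek.1)

open Classical in
/-- The number of positively oriented lifts of the edge `e` traversed by a walk in the cover. -/
noncomputable def countLiftF (m : ℕ) (T₀ : Set E) (e : E)
    (p : List ((E × ({e' : E // e' ∉ T₀} → ZMod m)) × Bool)) : ℕ :=
  (p.filter fun s => s.1.1 = e ∧ s.2 = true).length

open Classical in
/-- The number of negatively oriented lifts of the edge `e` traversed by a walk in the cover. -/
noncomputable def countLiftB (m : ℕ) (T₀ : Set E) (e : E)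
    (p : List ((E × ({e' : E // e' ∉ T₀} → ZMod m)) × Bool)) : ℕ :=
  (p.filter fun s => s.1.1 = e ∧ s.2 = false).length

/-- `φ(e, x, y)`: the smallest non-negative residue modulo `m` of the absolute difference
between the numbers of positively and negatively oriented lifts of `e` traversed by the
chosen geodesic from `x` to `y` in the `ℤ/m`-homology cover. -/
noncomputable def phi (m : ℕ) (src tgt : E → V) (T₀ : Set E) (e : E)
    (x y : V × ({e' : E // e' ∉ T₀} → ZMod m)) : ℕ :=
  (((countLiftF m T₀ e (geod (coverSrc m src T₀) (coverTgt m tgt T₀) x y) : ℤ) -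
      (countLiftB m T₀ e (geod (coverSrc m src T₀) (coverTgt m tgt T₀) x y) : ℤ)).natAbs) % m

/-- The pseudometric `d_Q` on the `ℤ/m`-homology cover:
`d_Q(x,y) = Σ_{e ∈ E} Σ_{T : e ∉ T} (1/N_e) · min{φ(e,x,y), m − φ(e,x,y)}`,
the inner sum ranging over maximal spanning trees not containing `e`. -/
noncomputable def dQ (m : ℕ) (src tgt : E → V) (T₀ : Set E)
    (x y : V × ({e' : E // e' ∉ T₀} → ZMod m)) : ℝ :=
  ∑ᶠ (e : E), ∑ᶠ (T : Set E) (_ : IsSpanningTree src tgt T ∧ e ∉ T),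
    (1 / (numTreesAvoiding src tgt e : ℝ)) *
      min (phi m src tgt T₀ e x y : ℝ) ((m : ℝ) - (phi m src tgt T₀ e x y : ℝ))

open Classical in
/-- The distance `d_T(C^T_x, C^T_y)` between the clouds of `x` and `y` in the Cayley graph
of `(ℤ/m)^{E ∖ T}` obtained by collapsing the clouds associated to the maximal spanning
tree `T`: the least number of lifts of edges outside `T` traversed by a walk from `x` to `y`
in the cover. -/
noncomputable def cloudDist (m : ℕ) (src tgt : E → V) (T₀ : Set E) (T : Set E)
    (x y : V × ({e' : E // e' ∉ T₀} → ZMod m)) : ℕ :=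
  sInf {n | ∃ p, IsWalk (coverSrc m src T₀) (coverTgt m tgt T₀) x y p ∧
    (p.filter fun s => s.1.1 ∉ T).length = n}

open Classical in
/-- The cloud `C^T_x ∈ (ℤ/m)^{E ∖ T}` containing `x`, computed from a chosen geodesic from a
fixed basepoint of the cover to `x` by counting signed traversals of lifts of edges outside
`T`. -/
noncomputable def cloud (m : ℕ) (src tgt : E → V) (T₀ : Set E) (T : Set E)
    (x : V × ({e' : E // e' ∉ T₀} → ZMod m)) : {e : E // e ∉ T} → ZMod m :=
  if h : Nonempty (V × ({e' : E // e' ∉ T₀} → ZMod m)) then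
    fun f =>
      (((countLiftF m T₀ f.1 (geod (coverSrc m src T₀) (coverTgt m tgt T₀) h.some x) : ℤ) -
        (countLiftB m T₀ f.1 (geod (coverSrc m src T₀) (coverTgt m tgt T₀) h.some x) : ℤ)
          : ℤ) : ZMod m)
  else fun _ => 0

end Cover

/-- `(pV, pE)` is a covering of multigraphs: it commutes with the endpoint maps, and steps
lift uniquely at every vertex. -/
def IsGraphCovering {V' E' : Type*} (src tgt : E → V) (src' tgt' : E' → V')
    (pV : V' → V) (pE : E' → E) : Prop :=
  (∀ e : E', pV (src' e) = src (pE e)) ∧ (∀ e : E', pV (tgt' e) = tgt (pE e)) ∧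
  ∀ (v' : V') (s : E × Bool), stepSrc src tgt s = pV v' →
    ∃! s' : E' × Bool, stepSrc src' tgt' s' = v' ∧ pE s'.1 = s.1 ∧ s'.2 = s.2

end MultiGraph

/-- The word length of `a` with respect to the symmetrization of the generating set `S`
in an additive group. -/
noncomputable def addWordLength {A : Type*} [AddGroup A] (S : Set A) (a : A) : ℕ :=
  sInf {n | ∃ l : List A, (∀ x ∈ l, x ∈ S ∨ -x ∈ S) ∧ l.sum = a ∧ l.length = n}

open Classical in
/-- The word metric on `(ℤ/m)^r` with respect to the standard generating set
(one canonical generator for each factor). -/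
noncomputable def zmodWordDist (m r : ℕ) (a b : Fin r → ZMod m) : ℕ :=
  addWordLength {g : Fin r → ZMod m | ∃ i : Fin r, g = Pi.single i 1} (b - a)

/-!
Fix an edge `e`. Modulo `m`, the signed number of lifts of `e` traversed by a walk from `x` to `y`
in the homology cover does not depend on the walk: the `1`-cochain counting these traversals is
the coboundary of some `f_e : X̃ → ℤ/m`. Indeed, on a spanning tree it agrees with the coboundary
of the indicator function of one side of a fundamental cut, and what remains is absorbed by a
linear function of the deck coordinate. Hence `min {φ, m - φ}` is the cyclic distance
between `f_e x` and `f_e y`, and `d_Q` is the Lee metric pulled back along `x ↦ (f_e x)_e`, where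
`e` runs over the edges with `N_e ≠ 0`. The Lee metric lies between the Hamming metric and `m / 2`
times the Hamming metric, and twice the Hamming metric is the square of the Euclidean distance
between one-hot encodings. So `ρ₋ t = √(4 t / m)` and `ρ₊ t = √(2 t)` work.
-/

theorem finsum_mem_const_eq_ncard_nsmul {α M : Type*} [AddCommMonoid M] {s : Set α}
    (hs : s.Finite) (c : M) : ∑ᶠ a ∈ s, c = s.ncard • c := by
  rw [finsum_mem_eq_finite_toFinset_sum _ hs, Finset.sum_const, Set.ncard_eq_toFinset_card s hs]

theorem closure_range_pi_single_one_eq_top (ι : Type*) [Finite ι] [DecidableEq ι] (m : ℕ)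
    [NeZero m] :
    AddSubmonoid.closure (Set.range fun i : ι => (Pi.single i 1 : ι → ZMod m)) = ⊤ := by
  have := Fintype.ofFinite ι
  refine top_unique fun k _ => ?_
  rw [← Finset.univ_sum_single k]
  refine sum_mem fun i _ => ?_
  have hi : Pi.single i (k i) = (k i).val • (Pi.single i 1 : ι → ZMod m) := by
    rw [← Pi.single_smul, nsmul_one, ZMod.natCast_zmod_val]
  rw [hi]
  exact nsmul_mem (AddSubmonoid.subset_closure (Set.mem_range_self i)) _

section Lee

variable {m : ℕ} {ι : Type*} [Fintype ι]

theorem min_natAbs_mod_eq_natAbs_valMinAbs [NeZero m] (z : ℤ) :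
    min ((z.natAbs % m : ℕ) : ℝ) (m - (z.natAbs % m : ℕ)) =
      ((z : ZMod m).valMinAbs.natAbs : ℝ) := by
  have hle : z.natAbs % m ≤ m := (Nat.mod_lt _ (NeZero.pos m)).le
  have habs : (z : ZMod m).valMinAbs.natAbs = (z.natAbs : ZMod m).valMinAbs.natAbs := by
    rcases Int.natAbs_eq z with hz | hz
    · conv_lhs => rw [hz, Int.cast_natCast]
    · conv_lhs => rw [hz, Int.cast_neg, Int.cast_natCast, ZMod.natAbs_valMinAbs_neg]
  rw [habs, ZMod.valMinAbs_natAbs_eq_min, ZMod.val_natCast, Nat.cast_min, Nat.cast_sub hle]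

/-- The Lee distance on `(ℤ/m)^ι` of coding theory: the sum over the coordinates of the cyclic
distances. -/
def leeDist (a b : ι → ZMod m) : ℕ :=
  ∑ i, (b i - a i).valMinAbs.natAbs

theorem hammingDist_le_leeDist (a b : ι → ZMod m) : hammingDist a b ≤ leeDist a b := by
  rw [hammingDist, Finset.card_filter]
  refine Finset.sum_le_sum fun i _ => ?_
  split_ifs with hab
  · rw [Nat.one_le_iff_ne_zero, Int.natAbs_ne_zero, Ne, ZMod.valMinAbs_eq_zero, sub_eq_zero]
    exact hab.symm
  · exact Nat.zero_le _

theorem two_mul_leeDist_le [NeZero m] (a b : ι → ZMod m) :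
    2 * leeDist a b ≤ m * hammingDist a b := by
  rw [hammingDist, Finset.card_filter, leeDist, Finset.mul_sum, Finset.mul_sum]
  refine Finset.sum_le_sum fun i _ => ?_
  split_ifs with hab
  · have := ZMod.natAbs_valMinAbs_le (b i - a i)
    omega
  · simp [not_not.1 hab]

end Lee

section HilbertSpace

theorem nonempty_linearIsometry_of_orthonormal {𝕜 κ H : Type*} [RCLike 𝕜] [Infinite κ]
    [NormedAddCommGroup H] [InnerProductSpace 𝕜 H] {u : κ → H} (hu : Orthonormal 𝕜 u)
    (W : Type*) [NormedAddCommGroup W] [InnerProductSpace 𝕜 W] [FiniteDimensional 𝕜 W] :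
    Nonempty (W →ₗᵢ[𝕜] H) := by
  let b := stdOrthonormalBasis 𝕜 W
  let j : Fin (Module.finrank 𝕜 W) ↪ κ := Fin.valEmbedding.trans (Infinite.natEmbedding κ)
  let L : W →ₗ[𝕜] H := b.toBasis.constr 𝕜 (u ∘ j)
  have hLb : L ∘ b.toBasis = u ∘ j := funext (b.toBasis.constr_basis 𝕜 _)
  have hb : Orthonormal 𝕜 b.toBasis := b.coe_toBasis ▸ b.orthonormal
  exact ⟨L.isometryOfOrthonormal hb (hLb ▸ hu.comp j j.injective)⟩

theorem dist_sq_eq_two_of_orthonormal {α H : Type*} [NormedAddCommGroup H] [InnerProductSpace ℝ H]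
    {u : α → H} (hu : Orthonormal ℝ u) {a b : α} (hab : a ≠ b) :
    dist (u a) (u b) ^ 2 = 2 := by
  rw [dist_eq_norm, norm_sub_sq_real, hu.1 a, hu.1 b, hu.2 hab]
  norm_num

/-- One-hot encoding of words of length `ι` over the alphabet `α`: the letter `c` is encoded by
the basis vector `e_c` of `ℝ^α`. -/
noncomputable def oneHot {ι α : Type*} [DecidableEq α] (a : ι → α) :
    PiLp 2 fun _ : ι => EuclideanSpace ℝ α :=
  WithLp.toLp 2 fun i => EuclideanSpace.single (a i) 1

theorem dist_sq_oneHot {ι α : Type*} [Fintype ι] [Fintype α] [DecidableEq α] (a b : ι → α) :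
    dist (oneHot a) (oneHot b) ^ 2 = 2 * hammingDist a b := by
  rw [PiLp.dist_sq_eq_of_L2, hammingDist, Finset.card_filter, Nat.cast_sum, Finset.mul_sum]
  refine Finset.sum_congr rfl fun i _ => ?_
  by_cases hab : a i = b i
  · simp [oneHot, hab]
  · have hdist := dist_sq_eq_two_of_orthonormal (EuclideanSpace.orthonormal_single (𝕜 := ℝ)) hab
    simpa [oneHot, hab] using hdist

theorem exists_dist_sq_eq_two_mul_hammingDist (ι α : Type*) [Fintype ι] [Finite α]
    [DecidableEq α] :
    ∃ G : (ι → α) → lp (fun _ : ℕ => ℝ) 2,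
      ∀ a b, dist (G a) (G b) ^ 2 = 2 * hammingDist a b := by
  have := Fintype.ofFinite α
  let std : HilbertBasis ℕ ℝ (lp (fun _ : ℕ => ℝ) 2) := ⟨.refl ℝ _⟩
  obtain ⟨L⟩ := nonempty_linearIsometry_of_orthonormal std.orthonormal
    (PiLp 2 fun _ : ι => EuclideanSpace ℝ α)
  exact ⟨fun a => L (oneHot a), fun a b => by rw [L.dist_map, dist_sq_oneHot]⟩

end HilbertSpace

namespace MultiGraph

variable {V E : Type*} {src tgt : E → V} {T : Set E}

section Walks

variable {a b c : V} {p q : List (E × Bool)} {s : E × Bool}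

theorem isWalk_append :
    IsWalk src tgt a c (p ++ q) ↔ ∃ b, IsWalk src tgt a b p ∧ IsWalk src tgt b c q := by
  induction p generalizing a with
  | nil => simp [IsWalk]
  | cons s p ih => simp only [List.cons_append, IsWalk, ih, and_assoc, exists_and_left]

theorem isWalk_singleton : IsWalk src tgt (stepSrc src tgt s) (stepTgt src tgt s) [s] :=
  ⟨rfl, rfl⟩

theorem geod_isWalk (h : ∃ p, IsWalk src tgt a b p) : IsWalk src tgt a b (geod src tgt a b) := by
  obtain ⟨p, hp⟩ := h
  have hgeod : ∃ q, IsWalk src tgt a b q ∧ q.length = gdist src tgt a b :=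
    Nat.sInf_mem (s := {n | ∃ q, IsWalk src tgt a b q ∧ q.length = n}) ⟨p.length, p, hp, rfl⟩
  rw [geod, dif_pos hgeod]
  exact hgeod.choose_spec.1

/-- A walk from `a` to `b` that visits no vertex twice, the final vertex `b` included. -/
def IsPath (src tgt : E → V) (a b : V) (p : List (E × Bool)) : Prop :=
  IsWalk src tgt a b p ∧ (p.map (stepSrc src tgt) ++ [b]).Nodup

theorem IsWalk.exists_isPath (hp : IsWalk src tgt a b p) : ∃ q ⊆ p, IsPath src tgt a b q := by
  induction p generalizing a with
  | nil => exact ⟨[], List.Subset.refl _, hp, List.nodup_singleton b⟩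
  | cons s p ih =>
    obtain ⟨q, hqp, hq, hnodup⟩ := ih hp.2
    by_cases ha : a ∈ q.map (stepSrc src tgt) ++ [b]
    · rcases List.mem_append.1 ha with haq | hab
      · obtain ⟨t, ht, rfl⟩ := List.mem_map.1 haq
        obtain ⟨q₁, q₂, rfl⟩ := List.append_of_mem ht
        obtain ⟨_, -, hq₂⟩ := isWalk_append.1 hq
        refine ⟨t :: q₂, fun r hr => .tail s (hqp (List.mem_append_right q₁ hr)),
          ⟨rfl, hq₂.2⟩, ?_⟩
        rw [List.map_append, List.append_assoc] at hnodup
        exact hnodup.of_append_right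
      · exact ⟨[], List.nil_subset _, List.mem_singleton.1 hab, List.nodup_singleton b⟩
    · refine ⟨s :: q, List.cons_subset_cons s hqp, ⟨hp.1, hq⟩, ?_⟩
      rw [List.map_cons, List.cons_append, hp.1]
      exact hnodup.cons ha

theorem IsWalk.start_mem_support (hp : IsWalk src tgt a b p) :
    a ∈ p.map (stepSrc src tgt) ++ [b] := by
  cases p with
  | nil => exact List.mem_singleton.2 hp
  | cons s p => exact hp.1 ▸ List.mem_cons_self

theorem IsWalk.stepTgt_mem_support (hp : IsWalk src tgt a b p) (hs : s ∈ p) :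
    stepTgt src tgt s ∈ p.map (stepSrc src tgt) ++ [b] := by
  obtain ⟨p₁, p₂, rfl⟩ := List.append_of_mem hs
  obtain ⟨_, -, hp₂⟩ := isWalk_append.1 hp
  rw [List.map_append, List.append_assoc]
  exact List.mem_append_right _ (.tail _ hp₂.2.start_mem_support)

theorem stepSrc_eq_of_fst_eq {s t : E × Bool} (h : s.1 = t.1) :
    stepSrc src tgt s = stepSrc src tgt t ∨ stepSrc src tgt s = stepTgt src tgt t := by
  obtain ⟨e, i⟩ := s
  obtain ⟨e', j⟩ := t
  obtain rfl : e = e' := h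
  cases i <;> cases j <;> simp [stepSrc, stepTgt]

theorem IsPath.nodup_edges (hp : IsPath src tgt a b p) : (p.map Prod.fst).Nodup := by
  induction p generalizing a with
  | nil => exact List.nodup_nil
  | cons s p ih =>
    obtain ⟨⟨-, hwalk⟩, hnodup⟩ := hp
    obtain ⟨hs, hnodup⟩ := List.nodup_cons.1 hnodup
    refine List.nodup_cons.2 ⟨fun hmem => hs ?_, ih ⟨hwalk, hnodup⟩⟩
    obtain ⟨t, ht, hts⟩ := List.mem_map.1 hmem
    rcases stepSrc_eq_of_fst_eq (src := src) (tgt := tgt) hts.symm with h | h <;> rw [h]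
    · exact List.mem_append_left _ (List.mem_map_of_mem ht)
    · exact hwalk.stepTgt_mem_support ht

theorem IsPath.isCycle_cons (hp : IsPath src tgt (stepTgt src tgt s) (stepSrc src tgt s) p)
    (hs : s.1 ∉ p.map Prod.fst) : IsCycle src tgt (stepSrc src tgt s) (s :: p) :=
  ⟨⟨rfl, hp.1⟩, List.cons_ne_nil s p, hp.nodup_edges.cons hs,
    (List.perm_append_singleton _ _).nodup hp.2⟩

end Walks

section Cochains

variable {A : Type*} [AddCommGroup A] {a b : V} {p : List (E × Bool)}

/-- The coboundary `δf` of a `0`-cochain `f`. -/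
def coboundary (src tgt : E → V) (f : V → A) (e : E) : A :=
  f (tgt e) - f (src e)

/-- The integral of the `1`-cochain `ω` along a walk; edges traversed backwards count
negatively. -/
def walkSum (ω : E → A) (p : List (E × Bool)) : A :=
  (p.map fun s => if s.2 then ω s.1 else -ω s.1).sum

theorem walkSum_cons (ω : E → A) (s : E × Bool) (p : List (E × Bool)) :
    walkSum ω (s :: p) = (if s.2 then ω s.1 else -ω s.1) + walkSum ω p :=
  List.sum_cons

theorem IsWalk.walkSum_coboundary (hp : IsWalk src tgt a b p) (f : V → A) :
    walkSum (coboundary src tgt f) p = f b - f a := by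
  induction p generalizing a with
  | nil => simp [walkSum, show a = b from hp]
  | cons s p ih =>
    obtain ⟨rfl, hp⟩ := hp
    rw [walkSum_cons, ih hp]
    obtain ⟨e, _ | _⟩ := s <;> simp [coboundary, stepSrc, stepTgt]

end Cochains

section SpanningTrees

/-- The component of the terminal vertex of `e` in the graph with edge set `T ∖ {e}`. For an edge
`e` of a spanning tree `T` it is one side of the fundamental cut of `e`. -/
def cutSide (src tgt : E → V) (T : Set E) (e : E) : Set V :=
  {v | ∃ p, IsWalk src tgt (tgt e) v p ∧ ∀ s ∈ p, s.1 ∈ T \ {e}}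

theorem tgt_mem_cutSide (e : E) : tgt e ∈ cutSide src tgt T e :=
  ⟨[], rfl, fun _ hs => absurd hs List.not_mem_nil⟩

theorem stepTgt_mem_cutSide {e : E} {s : E × Bool} (hs : s.1 ∈ T \ {e})
    (h : stepSrc src tgt s ∈ cutSide src tgt T e) : stepTgt src tgt s ∈ cutSide src tgt T e := by
  obtain ⟨p, hp, hpT⟩ := h
  refine ⟨p ++ [s], isWalk_append.2 ⟨_, hp, isWalk_singleton⟩,
    List.forall_mem_append.2 ⟨hpT, List.forall_mem_singleton.2 hs⟩⟩

theorem tgt_mem_cutSide_iff {e e' : E} (he' : e' ∈ T \ {e}) :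
    tgt e' ∈ cutSide src tgt T e ↔ src e' ∈ cutSide src tgt T e :=
  ⟨stepTgt_mem_cutSide (s := (e', false)) he', stepTgt_mem_cutSide (s := (e', true)) he'⟩

theorem IsSpanningTree.src_notMem_cutSide (hT : IsSpanningTree src tgt T) {e : E} (he : e ∈ T) :
    src e ∉ cutSide src tgt T e := by
  rintro ⟨p, hp, hpT⟩
  obtain ⟨q, hqp, hq⟩ := hp.exists_isPath
  have heq : e ∉ q.map Prod.fst := fun hmem => by
    obtain ⟨s, hs, hse⟩ := List.mem_map.1 hmem
    exact (hpT s (hqp hs)).2 hse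
  obtain ⟨s, hs, hsT⟩ := hT.2 _ _ (IsPath.isCycle_cons (s := (e, true)) hq heq)
  rcases List.mem_cons.1 hs with rfl | hs
  · exact hsT he
  · exact hsT (hpT s (hqp hs)).1

open Classical in
theorem IsSpanningTree.coboundary_indicator_cutSide {R : Type*} [Ring R]
    (hT : IsSpanningTree src tgt T) (e : E) :
    Set.EqOn (coboundary src tgt ((cutSide src tgt T e).indicator 1)) (Pi.single e (1 : R)) T := by
  intro e' he'
  by_cases hee' : e' = e
  · subst hee'
    simp [coboundary, tgt_mem_cutSide, hT.src_notMem_cutSide he']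
  · simp [coboundary, Set.indicator_apply, tgt_mem_cutSide_iff ⟨he', hee'⟩, hee']

theorem IsSpanningTree.exists_eqOn_coboundary [Finite E] {R : Type*} [Ring R]
    (hT : IsSpanningTree src tgt T) (ω : E → R) :
    ∃ h : V → R, Set.EqOn (coboundary src tgt h) ω T := by
  classical
  have := Fintype.ofFinite E
  refine ⟨fun v => ∑ e, ω e * (cutSide src tgt T e).indicator 1 v, fun e' he' => ?_⟩
  calc coboundary src tgt (fun v => ∑ e, ω e * (cutSide src tgt T e).indicator 1 v) e'
      = ∑ e, ω e * coboundary src tgt ((cutSide src tgt T e).indicator 1) e' := by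
        simp only [coboundary, mul_sub, Finset.sum_sub_distrib]
    _ = ∑ e, ω e * (Pi.single e 1 : E → R) e' :=
        Finset.sum_congr rfl fun e _ => by rw [hT.coboundary_indicator_cutSide e he']
    _ = ω e' := by simp [Pi.single_apply]

end SpanningTrees

section HomologyCover

variable {m : ℕ}

theorem coverRho_of_mem {e : E} (he : e ∈ T) : coverRho m T e = 0 :=
  funext fun g => if_neg fun hg : g.1 = e => g.2 (hg ▸ he)

open Classical in
theorem coverRho_of_notMem {e : E} (he : e ∉ T) : coverRho m T e = Pi.single ⟨e, he⟩ 1 := by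
  ext g
  simp [coverRho, Pi.single_apply, Subtype.ext_iff]

theorem IsWalk.lift_of_forall_mem {a b : V} {p : List (E × Bool)} (hp : IsWalk src tgt a b p)
    (hpT : ∀ s ∈ p, s.1 ∈ T) (k : {e : E // e ∉ T} → ZMod m) :
    IsWalk (coverSrc m src T) (coverTgt m tgt T) (a, k) (b, k)
      (p.map fun s => ((s.1, k), s.2)) := by
  induction p generalizing a with
  | nil => exact congrArg (·, k) hp
  | cons s p ih =>
    obtain ⟨hs, hpT⟩ := List.forall_mem_cons.1 hpT
    obtain ⟨rfl, hp⟩ := hp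
    have ih := ih hp hpT
    obtain ⟨e, _ | _⟩ := s <;>
      simpa [IsWalk, stepSrc, stepTgt, coverSrc, coverTgt, coverRho_of_mem hs] using ih

theorem IsSpanningTree.exists_isWalk_cover_sheet (hT : IsSpanningTree src tgt T) (a b : V)
    (k : {e : E // e ∉ T} → ZMod m) :
    ∃ p, IsWalk (coverSrc m src T) (coverTgt m tgt T) (a, k) (b, k) p := by
  obtain ⟨p, hp, hpT⟩ := hT.1 a b
  exact ⟨_, hp.lift_of_forall_mem hpT k⟩

theorem IsSpanningTree.exists_isWalk_cover_fiber [Finite E] [NeZero m]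
    (hT : IsSpanningTree src tgt T) (v : V) (k d : {e : E // e ∉ T} → ZMod m) :
    ∃ p, IsWalk (coverSrc m src T) (coverTgt m tgt T) (v, k) (v, k + d) p := by
  classical
  have hd : d ∈ AddSubmonoid.closure
      (Set.range fun g => (Pi.single g 1 : {e : E // e ∉ T} → ZMod m)) := by
    rw [closure_range_pi_single_one_eq_top]
    exact AddSubmonoid.mem_top d
  induction hd using AddSubmonoid.closure_induction generalizing k with
  | zero => exact ⟨[], by simp [IsWalk]⟩
  | add d d' _ _ ihd ihd' =>
    obtain ⟨p, hp⟩ := ihd k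
    obtain ⟨q, hq⟩ := ihd' (k + d)
    exact ⟨p ++ q, isWalk_append.2 ⟨_, hp, add_assoc k d d' ▸ hq⟩⟩
  | mem d hd =>
    obtain ⟨g, rfl⟩ := hd
    obtain ⟨p, hp⟩ := hT.exists_isWalk_cover_sheet v (src g) k
    obtain ⟨q, hq⟩ := hT.exists_isWalk_cover_sheet (tgt g) v (k + Pi.single g 1)
    refine ⟨p ++ ((g.1, k), true) :: q, isWalk_append.2 ⟨_, hp, rfl, ?_⟩⟩
    simpa [stepTgt, coverTgt, coverRho_of_notMem g.2] using hq

theorem IsSpanningTree.cover_connected [Finite E] [NeZero m] (hT : IsSpanningTree src tgt T) :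
    Connected (coverSrc m src T) (coverTgt m tgt T) := by
  rintro ⟨a, k⟩ ⟨b, l⟩
  obtain ⟨p, hp⟩ := hT.exists_isWalk_cover_fiber a k (l - k)
  obtain ⟨q, hq⟩ := hT.exists_isWalk_cover_sheet a b l
  exact ⟨p ++ q, isWalk_append.2 ⟨_, hp, (add_sub_cancel k l).symm ▸ hq⟩⟩

open Matrix in
theorem IsSpanningTree.exists_coboundary_cover_eq [Finite E] (hT : IsSpanningTree src tgt T)
    (ω : E → ZMod m) :
    ∃ f : V × ({e : E // e ∉ T} → ZMod m) → ZMod m,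
      coboundary (coverSrc m src T) (coverTgt m tgt T) f = ω ∘ Prod.fst := by
  classical
  have := Fintype.ofFinite E
  obtain ⟨h, hh⟩ := hT.exists_eqOn_coboundary ω
  -- The periods of `ω - δh` around the fundamental cycles of `T`.
  let c : {e : E // e ∉ T} → ZMod m := fun g => ω g - coboundary src tgt h g
  have hc (e : E) : c ⬝ᵥ coverRho m T e = ω e - coboundary src tgt h e := by
    by_cases he : e ∈ T
    · rw [coverRho_of_mem he, dotProduct_zero, hh he, sub_self]
    · rw [coverRho_of_notMem he, dotProduct_single_one]
  refine ⟨fun x => h x.1 + c ⬝ᵥ x.2, funext fun ek => ?_⟩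
  calc h (tgt ek.1) + c ⬝ᵥ (ek.2 + coverRho m T ek.1) - (h (src ek.1) + c ⬝ᵥ ek.2)
      = coboundary src tgt h ek.1 + c ⬝ᵥ coverRho m T ek.1 := by
        rw [dotProduct_add, coboundary]
        ring
    _ = ω ek.1 := by rw [hc, add_sub_cancel]

open Classical in
theorem intCast_countLiftF_sub_countLiftB {R : Type*} [AddCommGroupWithOne R] (e : E)
    (p : List ((E × ({e' : E // e' ∉ T} → ZMod m)) × Bool)) :
    (((countLiftF m T e p : ℤ) - countLiftB m T e p : ℤ) : R) =
      walkSum (Pi.single e 1 ∘ Prod.fst) p := by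
  induction p with
  | nil => simp [countLiftF, countLiftB, walkSum]
  | cons s p ih =>
    have hF : countLiftF m T e (s :: p) =
        countLiftF m T e p + if s.1.1 = e ∧ s.2 = true then 1 else 0 := by
      simp only [countLiftF, ← List.countP_eq_length_filter, List.countP_cons, decide_eq_true_eq]
    have hB : countLiftB m T e (s :: p) =
        countLiftB m T e p + if s.1.1 = e ∧ s.2 = false then 1 else 0 := by
      simp only [countLiftB, ← List.countP_eq_length_filter, List.countP_cons, decide_eq_true_eq]
    rw [walkSum_cons, ← ih, hF, hB]
    obtain ⟨⟨e', k⟩, _ | _⟩ := s <;> by_cases he : e' = e <;> simp [he] <;> abel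

theorem IsSpanningTree.exists_min_phi_eq [Finite E] [NeZero m] (hT : IsSpanningTree src tgt T)
    (e : E) :
    ∃ f : V × ({e' : E // e' ∉ T} → ZMod m) → ZMod m, ∀ x y,
      min (phi m src tgt T e x y : ℝ) (m - phi m src tgt T e x y) =
        ((f y - f x).valMinAbs.natAbs : ℝ) := by
  classical
  obtain ⟨f, hf⟩ := hT.exists_coboundary_cover_eq (Pi.single e (1 : ZMod m))
  refine ⟨f, fun x y => ?_⟩
  have hgeod := geod_isWalk (hT.cover_connected (m := m) x y)
  rw [phi, min_natAbs_mod_eq_natAbs_valMinAbs, intCast_countLiftF_sub_countLiftB, ← hf,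
    hgeod.walkSum_coboundary f]

theorem dQ_eq_sum_min_phi [Fintype E] (x y : V × ({e : E // e ∉ T} → ZMod m)) :
    dQ m src tgt T x y = ∑ e : {e : E // numTreesAvoiding src tgt e ≠ 0},
      min (phi m src tgt T e x y : ℝ) (m - phi m src tgt T e x y) := by
  have hinner (e : E) (r : ℝ) : ∑ᶠ (S : Set E) (_ : IsSpanningTree src tgt S ∧ e ∉ S),
      1 / (numTreesAvoiding src tgt e : ℝ) * r =
        if numTreesAvoiding src tgt e ≠ 0 then r else 0 := by
    have hcard : {S | IsSpanningTree src tgt S ∧ e ∉ S}.ncard = numTreesAvoiding src tgt e := rfl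
    refine (finsum_mem_const_eq_ncard_nsmul
      (Set.toFinite {S | IsSpanningTree src tgt S ∧ e ∉ S}) _).trans ?_
    rw [hcard, nsmul_eq_mul]
    split_ifs with hN
    · field_simp
    · rw [not_not.1 hN, Nat.cast_zero, zero_mul]
  rw [dQ, finsum_eq_sum_of_fintype, Finset.sum_congr rfl fun e _ => hinner e _,
    ← Finset.sum_filter]
  exact Finset.sum_subtype _ (by simp) _

theorem IsSpanningTree.exists_dQ_eq_leeDist [Fintype E] [NeZero m]
    (hT : IsSpanningTree src tgt T) :
    ∃ f : V × ({e : E // e ∉ T} → ZMod m) → {e : E // numTreesAvoiding src tgt e ≠ 0} → ZMod m,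
      ∀ x y, dQ m src tgt T x y = leeDist (f x) (f y) := by
  choose f hf using hT.exists_min_phi_eq (m := m)
  refine ⟨fun x e => f e x, fun x y => ?_⟩
  rw [dQ_eq_sum_min_phi, leeDist, Nat.cast_sum]
  exact Finset.sum_congr rfl fun e _ => hf e x y

theorem IsSpanningTree.exists_lp_map_dist_sq_mem_Icc [Finite E] [NeZero m]
    (hT : IsSpanningTree src tgt T) :
    ∃ F : V × ({e : E // e ∉ T} → ZMod m) → lp (fun _ : ℕ => ℝ) 2, ∀ x y,
      dist (F x) (F y) ^ 2 ∈
        Set.Icc (4 / m * dQ m src tgt T x y) (2 * dQ m src tgt T x y) := by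
  have := Fintype.ofFinite E
  obtain ⟨f, hf⟩ := hT.exists_dQ_eq_leeDist (m := m)
  obtain ⟨G, hG⟩ := exists_dist_sq_eq_two_mul_hammingDist
    {e : E // numTreesAvoiding src tgt e ≠ 0} (ZMod m)
  refine ⟨G ∘ f, fun x y => ?_⟩
  have hlower : (2 * leeDist (f x) (f y) : ℝ) ≤ m * hammingDist (f x) (f y) := by
    exact_mod_cast two_mul_leeDist_le (f x) (f y)
  have hupper : (hammingDist (f x) (f y) : ℝ) ≤ leeDist (f x) (f y) := by
    exact_mod_cast hammingDist_le_leeDist (f x) (f y)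
  have hm : (0 : ℝ) < m := Nat.cast_pos.2 (NeZero.pos m)
  rw [Function.comp_apply, Function.comp_apply, hG, hf, Set.mem_Icc, div_mul_eq_mul_div,
    div_le_iff₀ hm]
  constructor <;> linarith

end HomologyCover

end MultiGraph

theorem monotone_sqrt_const_mul {c : ℝ} (hc : 0 ≤ c) : Monotone fun t => √(c * t) :=
  fun _ _ h => Real.sqrt_le_sqrt (mul_le_mul_of_nonneg_left h hc)

theorem tendsto_sqrt_const_mul_atTop {c : ℝ} (hc : 0 < c) :
    Tendsto (fun t => √(c * t)) atTop atTop :=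
  Real.tendsto_sqrt_atTop.comp (tendsto_id.const_mul_atTop hc)

universe u v

open MultiGraph in
theorem homology_cover_embeds_uniformly_general (m : ℕ) [NeZero m] :
    ∃ ρminus ρplus : ℝ → ℝ, Monotone ρminus ∧ Monotone ρplus ∧
      Tendsto ρminus atTop atTop ∧ Tendsto ρplus atTop atTop ∧
      ∀ (V : Type u) (E : Type v) [Finite E] (src tgt : E → V) (T₀ : Set E),
        IsSpanningTree src tgt T₀ →
          ∃ F : (V × ({e : E // e ∉ T₀} → ZMod m)) → lp (fun _ : ℕ => ℝ) 2,
            ∀ x y : V × ({e : E // e ∉ T₀} → ZMod m),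
              ρminus (dQ m src tgt T₀ x y) ≤ dist (F x) (F y) ∧
              dist (F x) (F y) ≤ ρplus (dQ m src tgt T₀ x y) := by
  have hm : (0 : ℝ) < 4 / m := div_pos four_pos (Nat.cast_pos.2 (NeZero.pos m))
  refine ⟨fun t => √(4 / m * t), fun t => √(2 * t), monotone_sqrt_const_mul hm.le,
    monotone_sqrt_const_mul zero_le_two, tendsto_sqrt_const_mul_atTop hm,
    tendsto_sqrt_const_mul_atTop two_pos, fun V E _ src tgt T₀ hT => ?_⟩
  obtain ⟨F, hF⟩ := hT.exists_lp_map_dist_sq_mem_Icc (m := m)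
  exact ⟨F, fun x y => ⟨Real.sqrt_le_iff.2 ⟨dist_nonneg, (hF x y).1⟩,
    Real.le_sqrt_of_sq_le (hF x y).2⟩⟩

open MultiGraph in
/-- **Uniform embeddability of homology covers with respect to `d_Q`**: for every `m ≥ 3`
there are non-decreasing functions `ρ₋, ρ₊` tending to infinity, depending only on `m`,
such that every `ℤ/m`-homology cover `X̃` of a finite connected 2-connected graph `X`
(whose number of maximal spanning trees avoiding an edge does not depend on the edge)
admits a map `F` to `ℓ²(ℕ, ℝ)` with
`ρ₋(d_Q(x,y)) ≤ ‖F x − F y‖ ≤ ρ₊(d_Q(x,y))` for all `x, y ∈ X̃`. -/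
theorem homology_cover_embeds_uniformly (m : ℕ) (hm : 3 ≤ m) :
    ∃ ρminus ρplus : ℝ → ℝ, Monotone ρminus ∧ Monotone ρplus ∧
      Tendsto ρminus atTop atTop ∧ Tendsto ρplus atTop atTop ∧
      ∀ (V E : Type) (_ : Fintype V) (_ : Fintype E) (src tgt : E → V),
        Connected src tgt → TwoConnected src tgt →
        (∀ e e' : E, numTreesAvoiding src tgt e = numTreesAvoiding src tgt e') →
        ∀ T₀ : Set E, IsSpanningTree src tgt T₀ →
          ∃ F : (V × ({e : E // e ∉ T₀} → ZMod m)) → lp (fun _ : ℕ => ℝ) 2,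
            ∀ x y : V × ({e : E // e ∉ T₀} → ZMod m),
              ρminus (dQ m src tgt T₀ x y) ≤ dist (F x) (F y) ∧
              dist (F x) (F y) ≤ ρplus (dQ m src tgt T₀ x y) := by
  have : NeZero m := ⟨by omega⟩
  obtain ⟨ρminus, ρplus, hminus, hplus, hminus', hplus', h⟩ :=
    homology_cover_embeds_uniformly_general m
  exact ⟨ρminus, ρplus, hminus, hplus, hminus', hplus', fun V E _ _ src tgt _ _ _ => h V E src tgt⟩
end
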